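/- Let n ≥ 2, j ≥ 3, and let β ≥ 0 and α be real numbers such that either (n−3)/2 < β < (n−1)/2 and α ≤ β + (j−1)(β − (n−3)/2), or β ≥ (n−1)/2 and α < β + (j−1). Then there exist λ with 0 < λ < 1 and a constant C (depending on n, j, α, β and χ) such that for all Schwartz functions f₁,…,f_j on ℝⁿ and every 𝐫 = (r₁,…,r_{j−1}) ∈ (0,∞)^{j−1}, ‖ χ(·) K_{j,𝐫}(f̂₁,…,f̂_j)(·) ‖_{L²_α} ≤ C ( ∏_{i=1}^{j−1} (1+r_i)^{λ} ) ∏_{l=1}^{j} ‖f_l‖_{W^{β,2}_2}. -/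

import Mathlib

open MeasureTheory Filter Set
open scoped ENNReal RealInnerProductSpace

noncomputable section

abbrev Euc (n : ℕ) := EuclideanSpace ℝ (Fin n)

/-- The Japanese bracket `⟨x⟩ = (1+|x|²)^{1/2}`. -/
def jap {n : ℕ} (x : Euc n) : ℝ := Real.sqrt (1 + ‖x‖ ^ 2)

/-- The Ewald sphere measure `σ_{rη}`: the `(n-1)`-dimensional Hausdorff measure restricted
to `Γ_r(η) = {ξ : |ξ - η/2| = r|η|/2}`. -/
def ewaldM (n : ℕ) (r : ℝ) (η : Euc n) : Measure (Euc n) :=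
  (MeasureTheory.Measure.hausdorffMeasure ((n : ℝ) - 1)).restrict
    (Metric.sphere ((2 : ℝ)⁻¹ • η) (r * ‖η‖ / 2))

/-- The Fourier transform `f̂(ξ) = ∫ e^{-iξ·x} f(x) dx`. -/
def ft {n : ℕ} (f : Euc n → ℂ) (ξ : Euc n) : ℂ :=
  ∫ x : Euc n, Complex.exp (-Complex.I * ((⟪ξ, x⟫ : ℝ) : ℂ)) * f x

/-- `⟨D⟩^β f`: inverse Fourier transform of `⟨ξ⟩^β f̂(ξ)`. -/
def besselD {n : ℕ} (β : ℝ) (f : Euc n → ℂ) (x : Euc n) : ℂ :=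
  (((2 * Real.pi) ^ n : ℝ)⁻¹ : ℝ) •
    ∫ ξ : Euc n, Complex.exp (Complex.I * ((⟪ξ, x⟫ : ℝ) : ℂ)) *
      (((jap ξ ^ β : ℝ) : ℂ) * ft f ξ)

/-- The weighted Sobolev norm `‖f‖_{W^{β,2}_δ} = ‖⟨·⟩^δ ⟨D⟩^β f‖_{L²}`. -/
def wSobNorm {n : ℕ} (β δ : ℝ) (f : Euc n → ℂ) : ℝ≥0∞ :=
  eLpNorm (fun x : Euc n => (jap x ^ δ : ℝ) • besselD β f x) 2 volume

/-- The spherical operator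
`S_r(q)(η) = (2/(|η|(1+r))) ∫_{Γ_r(η)} q̂(ξ) q̂(η-ξ) dσ_{rη}(ξ)`. -/
def Sr {n : ℕ} (r : ℝ) (q : Euc n → ℂ) (η : Euc n) : ℂ :=
  ((2 / (‖η‖ * (1 + r))) : ℝ) • ∫ ξ, ft q ξ * ft q (η - ξ) ∂(ewaldM n r η)

/-- `K_r(g₁,g₂)(η) = (1/|η|) ∫_{Γ_r(η)} |g₁(ξ)||g₂(η-ξ)| dσ_{rη}(ξ)`. -/
def Kr {n : ℕ} (r : ℝ) (g₁ g₂ : Euc n → ℂ) (η : Euc n) : ℝ :=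
  ‖η‖⁻¹ * ∫ ξ, ‖g₁ ξ‖ * ‖g₂ (η - ξ)‖ ∂(ewaldM n r η)

/-- The `i`-th difference in the chain `η - ξ₀, ξ₀ - ξ₁, …, ξ_{k-2} - ξ_{k-1}, ξ_{k-1}`
(`0`-indexed version of `η-ξ₁, ξ₁-ξ₂, …, ξ_{j-2}-ξ_{j-1}, ξ_{j-1}` with `k = j-1`). -/
def chainDiff {n : ℕ} (k : ℕ) (η : Euc n) (ξ : Fin k → Euc n) (i : Fin (k + 1)) : Euc n :=
  (if h : (i : ℕ) = 0 then η else ξ ⟨(i : ℕ) - 1, by have := i.isLt; omega⟩) -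
    (if h : (i : ℕ) < k then ξ ⟨(i : ℕ), h⟩ else 0)

/-- `K_{j,𝐫}(g₁,…,g_j)(η)` with `j = k + 1` (`0`-indexed as `g : Fin (k+1) → _`):
`|η|^{-(j-1)} ∫_{Γ_{r₁}(η)}⋯∫_{Γ_{r_{j-1}}(η)} |g₁(η-ξ₁)| ∏|g_{i+1}(ξᵢ-ξ_{i+1})| |g_j(ξ_{j-1})| dσ`. -/
def Kj {n : ℕ} (k : ℕ) (r : Fin k → ℝ) (g : Fin (k + 1) → Euc n → ℂ) (η : Euc n) : ℝ :=
  ‖η‖ ^ (-(k : ℝ)) *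
    ∫ ξ : Fin k → Euc n, ∏ i : Fin (k + 1), ‖g i (chainDiff k η ξ i)‖
      ∂(Measure.pi fun i => ewaldM n (r i) η)

open scoped Topology NNReal FourierTransform SchwartzMap LineDeriv

/-!
The links `η - ξ₁, ξ₁ - ξ₂, …, ξₖ` of a chain add up to `η`, so the longest of them, say the `l`-th,
satisfies `⟨η⟩ ≤ (k + 1) ⟨ηₗ⟩`. Hence `⟨η⟩^β` times the chain product of the `|f̂ᵢ|` is at most a
constant times the chain product of the `⟨·⟩^β |f̂ᵢ|` divided by `⟨·⟩^b` of every link but the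
`l`-th, for any `b ≤ β`. By the Cauchy-Schwarz inequality on the product of the Ewald spheres,
its integral splits into two factors.

* Deleting the `l`-th link breaks the chain in two, and integrating `⟨·⟩^(-2b)` one sphere at a time
  gives `∏ (rᵢ |η|)^(2λ)` for `b = (n - 1) / 2 - λ` (a Schur test), since
  `∫_{S(c,R)} ⟨ζ - x⟩^(-2b) dσ(x) ≲ R^(n - 1 - 2b)` uniformly in `c` and `ζ`.
* In the chain integral of the `|⟨·⟩^β f̂ᵢ|²`, the trace inequality exchanges each sphere for the
  whole space, with a constant independent of its centre and radius, at the price of one derivative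
  on each of the two neighbouring factors. Every factor ends up with at most two derivatives, which
  Plancherel turns into the weight `⟨·⟩²` on the physical side; and integrating over `η`, the
  resulting iterated convolution becomes the product of the `‖f̂ᵢ‖²` in these norms.

What remains is the scalar `⟨η⟩^(α - β) |η|^(-k) |η|^(kλ)`, bounded away from the origin as soon as
`α - β ≤ k (1 - λ)`.
-/

/-! ### Integration over spheres -/

section Sphere

variable {m : ℕ}

/-- The projection along the `a`-th axis. Its values carry the sup norm, for which the
`m`-dimensional Hausdorff measure is Lebesgue measure. -/
def dropCoord (a : Fin (m + 1)) (x : Euc (m + 1)) : Fin m → ℝ := a.removeNth x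

lemma dropCoord_sub (a : Fin (m + 1)) (x y : Euc (m + 1)) :
    dropCoord a (x - y) = dropCoord a x - dropCoord a y := rfl

lemma continuous_dropCoord (a : Fin (m + 1)) : Continuous (dropCoord a) := by
  unfold dropCoord Fin.removeNth
  fun_prop

lemma norm_dropCoord_le (a : Fin (m + 1)) (x : Euc (m + 1)) : ‖dropCoord a x‖ ≤ ‖x‖ :=
  (pi_norm_le_iff_of_nonneg (norm_nonneg x)).2 fun i ↦ PiLp.norm_apply_le x (a.succAbove i)

lemma norm_le_sum_abs_apply {ι : Type*} [Fintype ι] (x : EuclideanSpace ℝ ι) :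
    ‖x‖ ≤ ∑ i, |x i| := by
  rw [EuclideanSpace.norm_eq, Real.sqrt_le_left (Finset.sum_nonneg fun i _ ↦ abs_nonneg (x i))]
  exact Finset.sum_sq_le_sq_sum_of_nonneg fun i _ ↦ abs_nonneg (x i)

lemma norm_le_abs_add_mul_norm_dropCoord (a : Fin (m + 1)) (x : Euc (m + 1)) :
    ‖x‖ ≤ |x a| + m * ‖dropCoord a x‖ := by
  have norm_le_sum := norm_le_sum_abs_apply x
  have drop_le : ∑ i, |x (a.succAbove i)| ≤ m * ‖dropCoord a x‖ := by
    have h := Finset.sum_le_card_nsmul Finset.univ _ _ fun i _ ↦ norm_le_pi_norm (dropCoord a x) i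
    rwa [Finset.card_univ, Fintype.card_fin, nsmul_eq_mul] at h
  rw [Fin.sum_univ_succAbove _ a] at norm_le_sum
  linarith

lemma abs_sub_mul_abs_add_le_of_norm_eq {x y : Euc (m + 1)} (h : ‖x‖ = ‖y‖) (a : Fin (m + 1)) :
    |x a - y a| * |x a + y a| ≤ m * (‖dropCoord a (x - y)‖ * ‖dropCoord a (x + y)‖) := by
  have orthogonal : (x a - y a) * (x a + y a) =
      -∑ i, dropCoord a (x - y) i * dropCoord a (x + y) i := by
    have inner_eq := (real_inner_add_sub_eq_zero_iff x y).2 h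
    rw [PiLp.inner_apply, Fin.sum_univ_succAbove _ a] at inner_eq
    exact eq_neg_of_add_eq_zero_left inner_eq
  have each : ∀ i ∈ Finset.univ, |dropCoord a (x - y) i * dropCoord a (x + y) i| ≤
      ‖dropCoord a (x - y)‖ * ‖dropCoord a (x + y)‖ := fun i _ ↦ by
    rw [abs_mul]
    exact mul_le_mul (norm_le_pi_norm (dropCoord a (x - y)) i)
      (norm_le_pi_norm (dropCoord a (x + y)) i) (abs_nonneg _) (norm_nonneg _)
  rw [← abs_mul, orthogonal, abs_neg]
  refine (Finset.abs_sum_le_sum_abs _ _).trans ?_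
  simpa using Finset.sum_le_card_nsmul _ _ _ each

/-- The cap of the sphere `S(c, R)` on which the `a`-th coordinate of `x - c` has sign `ε` and
absolute value at least `R / (m + 1)`. -/
def sphericalCap (c : Euc (m + 1)) (R : ℝ) (a : Fin (m + 1)) (ε : ℤˣ) : Set (Euc (m + 1)) :=
  {x ∈ Metric.sphere c R | R / (m + 1) ≤ ε • (x a - c a)}

lemma exists_div_le_abs_apply (x : Euc (m + 1)) : ∃ a, ‖x‖ / (m + 1) ≤ |x a| := by
  by_contra! hx
  refine lt_irrefl ‖x‖ ?_
  calc ‖x‖ ≤ ∑ i, |x i| := norm_le_sum_abs_apply x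
    _ < ∑ _i : Fin (m + 1), ‖x‖ / (m + 1) :=
        Finset.sum_lt_sum_of_nonempty Finset.univ_nonempty fun i _ ↦ hx i
    _ = ‖x‖ := by
        simp only [Finset.sum_const, Finset.card_univ, Fintype.card_fin, nsmul_eq_mul]
        push_cast
        field_simp

lemma sphere_subset_iUnion_sphericalCap (c : Euc (m + 1)) (R : ℝ) :
    Metric.sphere c R ⊆ ⋃ a, ⋃ ε, sphericalCap c R a ε := by
  intro x hx
  obtain ⟨a, ha⟩ := exists_div_le_abs_apply (x - c)
  rw [mem_sphere_iff_norm.1 hx] at ha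
  simp only [mem_iUnion]
  rcases abs_cases ((x - c) a) with ⟨habs, -⟩ | ⟨habs, -⟩
  · exact ⟨a, 1, hx, by rwa [one_smul, ← PiLp.sub_apply, ← habs]⟩
  · exact ⟨a, -1, hx, by rwa [Units.neg_smul, one_smul, ← PiLp.sub_apply, ← habs]⟩

variable {c : Euc (m + 1)} {R : ℝ} {a : Fin (m + 1)} {ε : ℤˣ}

lemma two_mul_div_le_abs_add_of_mem_sphericalCap {x y : Euc (m + 1)}
    (hx : x ∈ sphericalCap c R a ε) (hy : y ∈ sphericalCap c R a ε) :
    2 * (R / (m + 1)) ≤ |(x a - c a) + (y a - c a)| := by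
  obtain ⟨-, hx⟩ := hx
  obtain ⟨-, hy⟩ := hy
  rcases Int.units_eq_one_or ε with rfl | rfl
  · rw [one_smul] at hx hy
    exact le_abs.2 (Or.inl (by linarith))
  · rw [Units.neg_smul, one_smul] at hx hy
    exact le_abs.2 (Or.inr (by linarith))

lemma dist_le_of_mem_sphericalCap (hR : 0 < R) {x y : Euc (m + 1)}
    (hx : x ∈ sphericalCap c R a ε) (hy : y ∈ sphericalCap c R a ε) :
    dist x y ≤ m * (m + 2) * dist (dropCoord a x) (dropCoord a y) := by
  have hxR : ‖x - c‖ = R := mem_sphere_iff_norm.1 hx.1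
  have hyR : ‖y - c‖ = R := mem_sphere_iff_norm.1 hy.1
  have product_le := abs_sub_mul_abs_add_le_of_norm_eq (hxR.trans hyR.symm) a
  have sum_le : ‖dropCoord a ((x - c) + (y - c))‖ ≤ 2 * R :=
    (norm_dropCoord_le a _).trans ((norm_add_le _ _).trans (by linarith))
  have sum_ge := two_mul_div_le_abs_add_of_mem_sphericalCap hx hy
  simp only [sub_sub_sub_cancel_right, PiLp.sub_apply] at product_le
  rw [dist_eq_norm, dist_eq_norm, ← dropCoord_sub]
  set D := ‖dropCoord a (x - y)‖
  have coord_le : |(x - y) a| ≤ m * (m + 1) * D := by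
    have chain : |(x - y) a| * (2 * (R / (m + 1))) ≤ m * (D * (2 * R)) :=
      calc |(x - y) a| * (2 * (R / (m + 1)))
          ≤ |x a - y a| * |(x a - c a) + (y a - c a)| :=
          mul_le_mul_of_nonneg_left sum_ge (abs_nonneg _)
        _ ≤ m * (D * (2 * R)) := product_le.trans (by gcongr)
    have hm : (0 : ℝ) < m + 1 := by positivity
    rw [mul_div_assoc', mul_div_assoc', div_le_iff₀ hm] at chain
    nlinarith
  calc ‖x - y‖ ≤ |(x - y) a| + m * D := norm_le_abs_add_mul_norm_dropCoord a _
    _ ≤ m * (m + 2) * D := by linarith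

lemma hausdorffMeasure_le_of_subset_sphericalCap (hR : 0 < R) {A : Set (Euc (m + 1))}
    (hA : A ⊆ sphericalCap c R a ε) :
    Measure.hausdorffMeasure (m : ℝ) A ≤ ((m * (m + 2)) ^ m : ℕ) * volume (dropCoord a '' A) := by
  have antilipschitz : AntilipschitzWith ((m * (m + 2) : ℕ) : ℝ≥0) fun x : A ↦ dropCoord a x :=
    AntilipschitzWith.of_le_mul_dist fun x y ↦ by
      simpa [Subtype.dist_eq] using dist_le_of_mem_sphericalCap hR (hA x.2) (hA y.2)
  have volume_eq : (Measure.hausdorffMeasure (m : ℝ) : Measure (Fin m → ℝ)) = volume := by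
    simpa using hausdorffMeasure_pi_real (ι := Fin m)
  have le_image := antilipschitz.le_hausdorffMeasure_image m.cast_nonneg univ
  rw [← (isometry_subtype_coe (s := A)).hausdorffMeasure_image (Or.inl m.cast_nonneg)] at le_image
  rw [image_univ, Subtype.range_coe, image_univ, volume_eq, ← Function.comp_def (dropCoord a),
    range_comp, Subtype.range_coe] at le_image
  simpa using le_image

lemma setLIntegral_sphericalCap_le (hR : 0 < R) {W : (Fin m → ℝ) → ℝ≥0∞} (hW : Measurable W) :
    ∫⁻ x in sphericalCap c R a ε, W (dropCoord a x) ∂(Measure.hausdorffMeasure (m : ℝ)) ≤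
      ((m * (m + 2)) ^ m : ℕ) * ∫⁻ y in Metric.closedBall (dropCoord a c) R, W y := by
  have hmeas := (continuous_dropCoord a).measurable
  rw [← lintegral_map hW hmeas, ← smul_eq_mul, ← lintegral_smul_measure]
  refine lintegral_mono' (Measure.le_intro fun B hB _ ↦ ?_) le_rfl
  rw [Measure.map_apply hmeas hB, Measure.restrict_apply (hmeas hB), Measure.smul_apply,
    smul_eq_mul, Measure.restrict_apply hB]
  refine (hausdorffMeasure_le_of_subset_sphericalCap hR inter_subset_right).trans ?_
  gcongr
  rintro _ ⟨x, ⟨hxB, hx, -⟩, rfl⟩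
  refine ⟨hxB, ?_⟩
  rw [mem_closedBall_iff_norm, ← dropCoord_sub]
  exact (norm_dropCoord_le a _).trans (mem_sphere_iff_norm.1 hx).le

/-- Twice the Lipschitz constant of the inverse projection of a `sphericalCap` to the power `m`;
the factor two counts the caps with a given axis. -/
def sphereConst (m : ℕ) : ℕ := 2 * (m * (m + 2)) ^ m

lemma setLIntegral_sphere_le (c : Euc (m + 1)) (hR : 0 < R) {F : Euc (m + 1) → ℝ≥0∞}
    {W : Fin (m + 1) → (Fin m → ℝ) → ℝ≥0∞} (hW : ∀ a, Measurable (W a))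
    (hF : ∀ a x, F x ≤ W a (dropCoord a x)) :
    ∫⁻ x in Metric.sphere c R, F x ∂(Measure.hausdorffMeasure (m : ℝ)) ≤
      sphereConst m * ∑ a, ∫⁻ y in Metric.closedBall (dropCoord a c) R, W a y := by
  rw [Finset.mul_sum]
  refine (lintegral_mono_set (sphere_subset_iUnion_sphericalCap c R)).trans <|
    (lintegral_iUnion_le _ _).trans ?_
  rw [tsum_fintype]
  refine Finset.sum_le_sum fun a _ ↦ (lintegral_iUnion_le _ _).trans ?_
  calc ∑' ε, ∫⁻ x in sphericalCap c R a ε, F x ∂(Measure.hausdorffMeasure (m : ℝ))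
      ≤ ∑' _ε : ℤˣ, ((m * (m + 2)) ^ m : ℕ) *
          ∫⁻ y in Metric.closedBall (dropCoord a c) R, W a y :=
        ENNReal.tsum_le_tsum fun ε ↦
          (lintegral_mono fun x ↦ hF a x).trans (setLIntegral_sphericalCap_le hR (hW a))
    _ = sphereConst m * ∫⁻ y in Metric.closedBall (dropCoord a c) R, W a y := by
        rw [tsum_fintype, Finset.sum_const, Finset.card_univ, Fintype.card_units_int,
          nsmul_eq_mul, sphereConst, ← mul_assoc]
        push_cast
        rfl

lemma hausdorffMeasure_sphere_lt_top (c : Euc (m + 1)) (hR : 0 < R) :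
    Measure.hausdorffMeasure (m : ℝ) (Metric.sphere c R) < ⊤ := by
  have h := setLIntegral_sphere_le c hR (F := fun _ ↦ 1) (W := fun _ _ ↦ 1)
    (fun _ ↦ measurable_const) fun _ _ ↦ le_rfl
  simp only [setLIntegral_one] at h
  exact h.trans_lt <| ENNReal.mul_lt_top (ENNReal.natCast_lt_top _) <|
    ENNReal.sum_lt_top.2 fun a _ ↦ measure_closedBall_lt_top

end Sphere

/-! ### The trace inequality on spheres -/

section Trace

variable {m : ℕ} {F : Type*} [NormedAddCommGroup F] [InnerProductSpace ℝ F]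

lemma enorm_two_mul_inner_le (x y : F) : ‖2 * ⟪x, y⟫‖ₑ ≤ ‖x‖ₑ ^ 2 + ‖y‖ₑ ^ 2 := by
  have h : |2 * ⟪x, y⟫| ≤ ‖x‖ ^ 2 + ‖y‖ ^ 2 := by
    rw [abs_mul, abs_two]
    linarith [abs_real_inner_le_norm x y, two_mul_le_add_sq ‖x‖ ‖y‖]
  rw [← ofReal_norm, ← ofReal_norm, ← ofReal_norm, ← ENNReal.ofReal_pow (norm_nonneg x),
    ← ENNReal.ofReal_pow (norm_nonneg y), ← ENNReal.ofReal_add (by positivity) (by positivity)]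
  exact ENNReal.ofReal_le_ofReal h

lemma enorm_sq_le_lintegral_add_deriv {φ : ℝ → F} (hφ : ContDiff ℝ 1 φ)
    (h0 : Tendsto φ atBot (𝓝 0)) (t : ℝ) :
    ‖φ t‖ₑ ^ 2 ≤ ∫⁻ s, (‖φ s‖ₑ ^ 2 + ‖deriv φ s‖ₑ ^ 2) := by
  by_cases hfin : ∫⁻ s, (‖φ s‖ₑ ^ 2 + ‖deriv φ s‖ₑ ^ 2) = ⊤
  · exact hfin ▸ le_top
  have hderiv (s : ℝ) : HasDerivAt (fun s ↦ ‖φ s‖ ^ 2) (2 * ⟪φ s, deriv φ s⟫) s :=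
    ((hφ.differentiable one_ne_zero) s).hasDerivAt.norm_sq
  have hcont : Continuous fun s ↦ 2 * ⟪φ s, deriv φ s⟫ :=
    continuous_const.mul (hφ.continuous.inner (hφ.continuous_deriv le_rfl))
  have hbound (s : ℝ) := enorm_two_mul_inner_le (φ s) (deriv φ s)
  have hint : Integrable fun s ↦ 2 * ⟪φ s, deriv φ s⟫ :=
    ⟨hcont.aestronglyMeasurable, (lintegral_mono hbound).trans_lt (lt_top_iff_ne_top.2 hfin)⟩
  have hlim : Tendsto (fun s ↦ ‖φ s‖ ^ 2) atBot (𝓝 0) := by simpa using h0.norm.pow 2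
  have ftc := integral_Iic_of_hasDerivAt_of_tendsto' (fun s (_ : s ∈ Iic t) ↦ hderiv s)
    hint.integrableOn hlim
  calc ‖φ t‖ₑ ^ 2 = ‖∫ s in Iic t, 2 * ⟪φ s, deriv φ s⟫‖ₑ := by
        rw [ftc, sub_zero, enorm_pow, enorm_norm]
    _ ≤ ∫⁻ s in Iic t, ‖2 * ⟪φ s, deriv φ s⟫‖ₑ := enorm_integral_le_lintegral_enorm _
    _ ≤ ∫⁻ s, (‖φ s‖ₑ ^ 2 + ‖deriv φ s‖ₑ ^ 2) :=
        (setLIntegral_le_lintegral _ _).trans (lintegral_mono hbound)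

/-- The point with `a`-th coordinate `t` and projection `dropCoord a` equal to `y`. -/
def insertCoord (a : Fin (m + 1)) (t : ℝ) (y : Fin m → ℝ) : Euc (m + 1) :=
  WithLp.toLp 2 (a.insertNth t y)

lemma insertCoord_apply_dropCoord (a : Fin (m + 1)) (x : Euc (m + 1)) :
    insertCoord a (x a) (dropCoord a x) = x :=
  congrArg (WithLp.toLp 2) (Fin.insertNth_self_removeNth a x.ofLp)

lemma insertCoord_eq_add_smul_single (a : Fin (m + 1)) (t : ℝ) (y : Fin m → ℝ) :
    insertCoord a t y = insertCoord a 0 y + t • EuclideanSpace.single a 1 := by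
  ext i
  induction i using Fin.succAboveCases a <;> simp [insertCoord]

lemma hasDerivAt_insertCoord (a : Fin (m + 1)) (t : ℝ) (y : Fin m → ℝ) :
    HasDerivAt (fun t ↦ insertCoord a t y) (EuclideanSpace.single a 1) t := by
  rw [funext fun t ↦ insertCoord_eq_add_smul_single a t y]
  simpa using ((hasDerivAt_id t).smul_const (EuclideanSpace.single a (1 : ℝ))).const_add
    (insertCoord a 0 y)

lemma contDiff_insertCoord (a : Fin (m + 1)) (y : Fin m → ℝ) :
    ContDiff ℝ 1 fun t ↦ insertCoord a t y := by
  rw [funext fun t ↦ insertCoord_eq_add_smul_single a t y]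
  fun_prop

lemma tendsto_insertCoord_cocompact (a : Fin (m + 1)) (y : Fin m → ℝ) :
    Tendsto (fun t ↦ insertCoord a t y) (cocompact ℝ) (cocompact _) := by
  rw [← Metric.cobounded_eq_cocompact (α := Euc (m + 1)), ← tendsto_norm_atTop_iff_cobounded]
  refine tendsto_atTop_mono (fun t ↦ ?_) (tendsto_norm_cocompact_atTop (E := ℝ))
  simpa [insertCoord] using PiLp.norm_apply_le (insertCoord a t y) a

lemma measurable_insertCoord (a : Fin (m + 1)) :
    Measurable fun p : ℝ × (Fin m → ℝ) ↦ insertCoord a p.1 p.2 :=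
  (WithLp.measurable_toLp 2 _).comp
    (MeasurableEquiv.piFinSuccAbove (fun _ : Fin (m + 1) ↦ ℝ) a).symm.measurable

lemma lintegral_lintegral_insertCoord (a : Fin (m + 1)) {f : Euc (m + 1) → ℝ≥0∞}
    (hf : Measurable f) : ∫⁻ y : Fin m → ℝ, ∫⁻ t, f (insertCoord a t y) = ∫⁻ x, f x := by
  rw [← (PiLp.volume_preserving_toLp (Fin (m + 1))).lintegral_comp hf,
    ← ((volume_preserving_piFinSuccAbove (fun _ : Fin (m + 1) ↦ ℝ) a).symm).lintegral_comp
      (f := fun x ↦ f (WithLp.toLp 2 x)) (hf.comp (WithLp.measurable_toLp 2 _))]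
  exact (lintegral_prod_symm _ (hf.comp (measurable_insertCoord a)).aemeasurable).symm

lemma lintegral_sphere_enorm_sq_le (c : Euc (m + 1)) {R : ℝ} (hR : 0 < R) {u : Euc (m + 1) → F}
    (hu : ContDiff ℝ 1 u) (h0 : Tendsto u (cocompact _) (𝓝 0)) :
    ∫⁻ x in Metric.sphere c R, ‖u x‖ₑ ^ 2 ∂(Measure.hausdorffMeasure (m : ℝ)) ≤
      sphereConst m *
        ∑ a, ∫⁻ x, (‖u x‖ₑ ^ 2 + ‖fderiv ℝ u x (EuclideanSpace.single a 1)‖ₑ ^ 2) := by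
  set E : Fin (m + 1) → Euc (m + 1) → ℝ≥0∞ := fun a x ↦
    ‖u x‖ₑ ^ 2 + ‖fderiv ℝ u x (EuclideanSpace.single a 1)‖ₑ ^ 2
  have hE (a : Fin (m + 1)) : Measurable (E a) :=
    (hu.continuous.enorm.measurable.pow_const 2).add <|
      ((hu.continuous_fderiv one_ne_zero).clm_apply continuous_const).enorm.measurable.pow_const 2
  have pointwise (a : Fin (m + 1)) (x : Euc (m + 1)) :
      ‖u x‖ₑ ^ 2 ≤ ∫⁻ t, E a (insertCoord a t (dropCoord a x)) := by
    have hderiv (t : ℝ) : deriv (fun t ↦ u (insertCoord a t (dropCoord a x))) t =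
        fderiv ℝ u (insertCoord a t (dropCoord a x)) (EuclideanSpace.single a 1) :=
      (((hu.differentiable one_ne_zero) _).hasFDerivAt.comp_hasDerivAt t
        (hasDerivAt_insertCoord a t _)).deriv
    have h := enorm_sq_le_lintegral_add_deriv (hu.comp (contDiff_insertCoord a (dropCoord a x)))
      (h0.comp ((tendsto_insertCoord_cocompact a _).mono_left atBot_le_cocompact)) (x a)
    simpa only [Function.comp_def, insertCoord_apply_dropCoord, hderiv] using h
  refine (setLIntegral_sphere_le c hR (W := fun a y ↦ ∫⁻ t, E a (insertCoord a t y))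
    (fun a ↦ ?_) pointwise).trans ?_
  · exact ((hE a).comp (measurable_insertCoord a)).lintegral_prod_left'
  · gcongr with a
    exact (setLIntegral_le_lintegral _ _).trans (lintegral_lintegral_insertCoord a (hE a)).le

end Trace

/-! ### Integration over finite products -/

section PiMeasure

variable {E : Type*} [MeasurableSpace E] {k : ℕ}

lemma lintegral_pi_succ (μ : Fin (k + 1) → Measure E) [∀ i, SigmaFinite (μ i)]
    {f : (Fin (k + 1) → E) → ℝ≥0∞} (hf : Measurable f) :
    ∫⁻ x, f x ∂(Measure.pi μ) =
      ∫⁻ x, ∫⁻ y, f (Fin.cons x y) ∂(Measure.pi fun i ↦ μ i.succ) ∂(μ 0) := by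
  rw [← ((measurePreserving_piFinSuccAbove μ 0).symm).lintegral_comp hf,
    lintegral_prod]
  · simp [MeasurableEquiv.piFinSuccAbove_symm_apply, Fin.insertNthEquiv]
  · exact (hf.comp (MeasurableEquiv.measurable _)).aemeasurable

lemma lintegral_pi_prod_eq_prod (μ : Fin k → Measure E) [∀ i, SigmaFinite (μ i)]
    {f : Fin k → E → ℝ≥0∞} (hf : ∀ i, Measurable (f i)) :
    ∫⁻ x, ∏ i, f i (x i) ∂(Measure.pi μ) = ∏ i, ∫⁻ x, f i x ∂(μ i) := by
  induction k with
  | zero => simp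
  | succ k ih =>
    rw [lintegral_pi_succ _ (by fun_prop), Fin.prod_univ_succ, ← ih _ fun i ↦ hf i.succ,
      ← lintegral_mul_const _ (hf 0)]
    refine lintegral_congr fun x ↦ ?_
    simp only [Fin.prod_univ_succ, Fin.cons_zero, Fin.cons_succ]
    exact lintegral_const_mul _ (by fun_prop)

end PiMeasure

/-! ### Singular weights on spheres -/

section Kernel

lemma setLIntegral_Ioc_enorm_rpow_neg {θ R : ℝ} (hθ : θ < 1) (hR : 0 ≤ R) :
    ∫⁻ t in Ioc 0 R, ‖t‖ₑ ^ (-θ) = ENNReal.ofReal (R ^ (1 - θ) / (1 - θ)) := by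
  have integrable : IntegrableOn (fun t : ℝ ↦ t ^ (-θ)) (Ioc 0 R) :=
    (intervalIntegrable_iff_integrableOn_Ioc_of_le hR).1
      (intervalIntegral.intervalIntegrable_rpow' (by linarith))
  have nonneg : ∀ᵐ t ∂volume.restrict (Ioc 0 R), 0 ≤ t ^ (-θ) :=
    (ae_restrict_mem measurableSet_Ioc).mono fun t ht ↦ Real.rpow_nonneg ht.1.le _
  calc ∫⁻ t in Ioc 0 R, ‖t‖ₑ ^ (-θ) = ∫⁻ t in Ioc 0 R, ENNReal.ofReal (t ^ (-θ)) :=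
        setLIntegral_congr_fun measurableSet_Ioc fun t ht ↦ by
          rw [Real.enorm_of_nonneg ht.1.le, ENNReal.ofReal_rpow_of_pos ht.1]
    _ = ENNReal.ofReal (∫ t in 0..R, t ^ (-θ)) := by
        rw [← ofReal_integral_eq_lintegral_ofReal integrable nonneg,
          intervalIntegral.integral_of_le hR]
    _ = ENNReal.ofReal (R ^ (1 - θ) / (1 - θ)) := by
        rw [integral_rpow (Or.inl (by linarith)), neg_add_eq_sub,
          Real.zero_rpow (sub_ne_zero.2 hθ.ne'), sub_zero]

lemma setLIntegral_Icc_enorm_rpow_neg_le {θ R : ℝ} (hθ : θ < 1) (hR : 0 ≤ R) :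
    ∫⁻ t in Icc (-R) R, ‖t‖ₑ ^ (-θ) ≤ 2 * ENNReal.ofReal (R ^ (1 - θ) / (1 - θ)) := by
  have cover : Icc (-R) R ⊆ Ioc 0 R ∪ ({0} ∪ Neg.neg ⁻¹' Ioc 0 R) := fun t ht ↦ by
    rcases lt_trichotomy t 0 with h | h | h
    · exact Or.inr (Or.inr ⟨neg_pos.2 h, neg_le.1 ht.1⟩)
    · exact Or.inr (Or.inl h)
    · exact Or.inl ⟨h, ht.2⟩
  have reflect : ∫⁻ t in Neg.neg ⁻¹' Ioc 0 R, ‖t‖ₑ ^ (-θ) = ∫⁻ t in Ioc 0 R, ‖t‖ₑ ^ (-θ) := by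
    simpa using (Measure.measurePreserving_neg (volume : Measure ℝ)).setLIntegral_comp_preimage
      (s := Ioc 0 R) measurableSet_Ioc (f := fun t ↦ ‖t‖ₑ ^ (-θ)) (by fun_prop)
  calc ∫⁻ t in Icc (-R) R, ‖t‖ₑ ^ (-θ)
      ≤ (∫⁻ t in Ioc 0 R, ‖t‖ₑ ^ (-θ)) +
          ((∫⁻ t in {(0 : ℝ)}, ‖t‖ₑ ^ (-θ)) + ∫⁻ t in Neg.neg ⁻¹' Ioc 0 R, ‖t‖ₑ ^ (-θ)) :=
        (lintegral_mono_set cover).trans <| (lintegral_union_le _ _ _).trans <| by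
          gcongr
          exact lintegral_union_le _ _ _
    _ = 2 * ENNReal.ofReal (R ^ (1 - θ) / (1 - θ)) := by
        rw [reflect, setLIntegral_Ioc_enorm_rpow_neg hθ hR, Measure.restrict_singleton]
        simp [two_mul]

lemma enorm_rpow_neg_le_add_indicator {θ R : ℝ} (h0 : 0 ≤ θ) (hR : 0 < R) (t : ℝ) :
    ‖t‖ₑ ^ (-θ) ≤
      ENNReal.ofReal (R ^ (-θ)) + (Icc (-R) R).indicator (fun s ↦ ‖s‖ₑ ^ (-θ)) t := by
  by_cases h : t ∈ Icc (-R) R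
  · rw [indicator_of_mem h]
    exact le_add_self
  · have hRt : R ≤ ‖t‖ := not_lt.1 fun hlt ↦ h (abs_le.1 hlt.le)
    rw [indicator_of_notMem h, add_zero, ← ENNReal.ofReal_rpow_of_pos hR, ENNReal.rpow_neg,
      ENNReal.rpow_neg, ENNReal.inv_le_inv, ← ofReal_norm]
    gcongr

lemma setLIntegral_closedBall_enorm_sub_rpow_neg_le {θ R : ℝ} (h0 : 0 ≤ θ) (hθ : θ < 1)
    (hR : 0 < R) (p z : ℝ) :
    ∫⁻ t in Metric.closedBall p R, ‖z - t‖ₑ ^ (-θ) ≤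
      ENNReal.ofReal ((2 + 2 / (1 - θ)) * R ^ (1 - θ)) := by
  have near : ∫⁻ t in Metric.closedBall p R,
      (Icc (-R) R).indicator (fun s ↦ ‖s‖ₑ ^ (-θ)) (z - t) ≤
        2 * ENNReal.ofReal (R ^ (1 - θ) / (1 - θ)) := by
    refine (setLIntegral_le_lintegral _ _).trans ?_
    rw [lintegral_sub_left_eq_self (fun t ↦ (Icc (-R) R).indicator (fun s ↦ ‖s‖ₑ ^ (-θ)) t) z,
      lintegral_indicator measurableSet_Icc]
    exact setLIntegral_Icc_enorm_rpow_neg_le hθ hR.le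
  have : 0 < 1 - θ := sub_pos.2 hθ
  calc ∫⁻ t in Metric.closedBall p R, ‖z - t‖ₑ ^ (-θ)
      ≤ ENNReal.ofReal (R ^ (-θ)) * ENNReal.ofReal (2 * R) +
          2 * ENNReal.ofReal (R ^ (1 - θ) / (1 - θ)) := by
        refine (lintegral_mono fun t ↦ enorm_rpow_neg_le_add_indicator h0 hR (z - t)).trans ?_
        rw [lintegral_add_left measurable_const, setLIntegral_const, Real.volume_closedBall]
        gcongr
    _ = ENNReal.ofReal ((2 + 2 / (1 - θ)) * R ^ (1 - θ)) := by
        rw [← ENNReal.ofReal_ofNat 2, ← ENNReal.ofReal_mul (by positivity),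
          ← ENNReal.ofReal_mul (by positivity),
          ← ENNReal.ofReal_add (by positivity) (by positivity),
          show (1 - θ) = -θ + 1 by ring, Real.rpow_add hR, Real.rpow_one]
        ring_nf

lemma one_le_jap {n : ℕ} (x : Euc n) : 1 ≤ jap x :=
  Real.one_le_sqrt.2 (le_add_of_nonneg_right (sq_nonneg _))

lemma jap_pos {n : ℕ} (x : Euc n) : 0 < jap x := zero_lt_one.trans_le (one_le_jap x)

lemma norm_le_jap {n : ℕ} (x : Euc n) : ‖x‖ ≤ jap x :=
  Real.le_sqrt_of_sq_le (le_add_of_nonneg_left zero_le_one)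

@[fun_prop]
lemma continuous_jap {n : ℕ} : Continuous (jap : Euc n → ℝ) := by
  unfold jap
  fun_prop

@[fun_prop]
lemma measurable_jap : Measurable (jap : Euc n → ℝ) := continuous_jap.measurable

/-- The weight `⟨·⟩^b` as an extended nonnegative function. -/
def japWeight {n : ℕ} (b : ℝ) (x : Euc n) : ℝ≥0∞ := ENNReal.ofReal (jap x ^ b)

lemma japWeight_add {n : ℕ} (b c : ℝ) (x : Euc n) :
    japWeight (b + c) x = japWeight b x * japWeight c x := by
  rw [japWeight, Real.rpow_add (jap_pos x), ENNReal.ofReal_mul (by have := jap_pos x; positivity)]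
  rfl

lemma japWeight_sq {n : ℕ} (b : ℝ) (x : Euc n) : japWeight b x ^ 2 = japWeight (2 * b) x := by
  rw [sq, ← japWeight_add, two_mul]

lemma one_le_japWeight {n : ℕ} {b : ℝ} (hb : 0 ≤ b) (x : Euc n) : 1 ≤ japWeight b x :=
  ENNReal.one_le_ofReal.2 (Real.one_le_rpow (one_le_jap x) hb)

@[fun_prop]
lemma measurable_japWeight {n : ℕ} (b : ℝ) : Measurable (japWeight b : Euc n → ℝ≥0∞) := by
  unfold japWeight
  fun_prop

variable {m : ℕ} {b : ℝ}

lemma japWeight_neg_le_prod (hm : m ≠ 0) (hb : 0 ≤ b) (a : Fin (m + 1)) (x : Euc (m + 1)) :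
    japWeight (-b) x ≤ ∏ i, ‖dropCoord a x i‖ₑ ^ (-(b / m)) := by
  have hm' : (m : ℝ) ≠ 0 := Nat.cast_ne_zero.2 hm
  calc japWeight (-b) x
      = ∏ _i : Fin m, ENNReal.ofReal (jap x) ^ (-(b / m)) := by
        rw [Finset.prod_const, Finset.card_univ, Fintype.card_fin, ← ENNReal.rpow_natCast,
          ← ENNReal.rpow_mul, ENNReal.ofReal_rpow_of_pos (jap_pos x), neg_mul,
          div_mul_cancel₀ b hm', japWeight]
    _ ≤ ∏ i, ‖dropCoord a x i‖ₑ ^ (-(b / m)) := Finset.prod_le_prod' fun i _ ↦ by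
        rw [ENNReal.rpow_neg, ENNReal.rpow_neg, ENNReal.inv_le_inv, ← ofReal_norm]
        gcongr
        exact (PiLp.norm_apply_le x _).trans (norm_le_jap x)

lemma setLIntegral_closedBall_prod_enorm_rpow_neg_le {θ R : ℝ} (h0 : 0 ≤ θ) (hθ : θ < 1)
    (hR : 0 < R) (p z : Fin m → ℝ) :
    ∫⁻ y in Metric.closedBall p R, ∏ i, ‖z i - y i‖ₑ ^ (-θ) ≤
      ENNReal.ofReal ((2 + 2 / (1 - θ)) ^ m * R ^ (m * (1 - θ))) := by
  have : 0 < 1 - θ := sub_pos.2 hθ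
  rw [closedBall_pi _ hR.le, volume_pi, Measure.restrict_pi_pi,
    lintegral_pi_prod_eq_prod _ (f := fun i t ↦ ‖z i - t‖ₑ ^ (-θ)) fun i ↦ by fun_prop]
  refine (Finset.prod_le_prod' fun i _ ↦
    setLIntegral_closedBall_enorm_sub_rpow_neg_le h0 hθ hR _ _).trans_eq ?_
  rw [Finset.prod_const, Finset.card_univ, Fintype.card_fin, ← ENNReal.ofReal_pow (by positivity),
    mul_pow, ← Real.rpow_mul_natCast hR.le, mul_comm (1 - θ)]

lemma exists_setLIntegral_sphere_japWeight_neg_le (hb : 0 ≤ b) (hbm : b < m) :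
    ∃ C : ℝ, 0 ≤ C ∧ ∀ (c : Euc (m + 1)) (R : ℝ), 0 < R → ∀ ζ : Euc (m + 1),
      ∫⁻ x in Metric.sphere c R, japWeight (-b) (ζ - x)
          ∂(Measure.hausdorffMeasure (m : ℝ)) ≤ ENNReal.ofReal (C * R ^ (m - b)) := by
  have hm : (0 : ℝ) < m := hb.trans_lt hbm
  have hm0 : m ≠ 0 := Nat.cast_ne_zero.1 hm.ne'
  have hθ0 : 0 ≤ b / m := by positivity
  have hθ1 : b / m < 1 := (div_lt_one hm).2 hbm
  have : 0 < 1 - b / m := sub_pos.2 hθ1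
  have hexp : m * (1 - b / m) = m - b := by field_simp
  refine ⟨sphereConst m * ((m + 1) * (2 + 2 / (1 - b / m)) ^ m), by positivity, fun c R hR ζ ↦ ?_⟩
  calc ∫⁻ x in Metric.sphere c R, japWeight (-b) (ζ - x)
          ∂(Measure.hausdorffMeasure (m : ℝ))
      ≤ sphereConst m * ∑ a, ∫⁻ y in Metric.closedBall (dropCoord a c) R,
          ∏ i, ‖dropCoord a ζ i - y i‖ₑ ^ (-(b / m)) :=
        setLIntegral_sphere_le c hR
          (W := fun a y ↦ ∏ i, ‖dropCoord a ζ i - y i‖ₑ ^ (-(b / m))) (fun a ↦ by fun_prop)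
          fun a x ↦ japWeight_neg_le_prod hm0 hb a (ζ - x)
    _ ≤ sphereConst m * ∑ _a : Fin (m + 1),
          ENNReal.ofReal ((2 + 2 / (1 - b / m)) ^ m * R ^ (m - b)) := by
        gcongr with a
        exact hexp ▸ setLIntegral_closedBall_prod_enorm_rpow_neg_le hθ0 hθ1 hR _ _
    _ = ENNReal.ofReal
          (sphereConst m * ((m + 1) * (2 + 2 / (1 - b / m)) ^ m) * R ^ (m - b)) := by
        rw [Finset.sum_const, Finset.card_univ, Fintype.card_fin, nsmul_eq_mul,
          ← ENNReal.ofReal_natCast, ← ENNReal.ofReal_natCast, ← ENNReal.ofReal_mul (by positivity),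
          ← ENNReal.ofReal_mul (by positivity)]
        push_cast
        ring_nf

end Kernel

/-! ### Chain integrals -/

section Chain

variable {n k : ℕ}

lemma chainDiff_eq_cons_sub_snoc (z : Euc n) (ξ : Fin k → Euc n) (i : Fin (k + 1)) :
    chainDiff k z ξ i =
      (Fin.cons z ξ : Fin (k + 1) → Euc n) i - (Fin.snoc ξ 0 : Fin (k + 1) → Euc n) i := by
  unfold chainDiff
  congr 1
  cases i using Fin.cases <;> simp

lemma chainDiff_cons_zero (z x : Euc n) (ξ : Fin k → Euc n) :
    chainDiff (k + 1) z (Fin.cons x ξ) 0 = z - x := by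
  simp [chainDiff]

lemma chainDiff_cons_succ (z x : Euc n) (ξ : Fin k → Euc n) (i : Fin (k + 1)) :
    chainDiff (k + 1) z (Fin.cons x ξ) i.succ = chainDiff k x ξ i := by
  rw [chainDiff_eq_cons_sub_snoc, chainDiff_eq_cons_sub_snoc, ← Fin.cons_snoc_eq_snoc_cons,
    Fin.cons_succ, Fin.cons_succ]

lemma sum_chainDiff (z : Euc n) (ξ : Fin k → Euc n) : ∑ i, chainDiff k z ξ i = z := by
  simp_rw [chainDiff_eq_cons_sub_snoc, Finset.sum_sub_distrib, Fin.sum_cons, Fin.sum_snoc]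
  abel

lemma continuous_chainDiff (i : Fin (k + 1)) :
    Continuous fun p : Euc n × (Fin k → Euc n) ↦ chainDiff k p.1 p.2 i := by
  unfold chainDiff
  split_ifs <;> fun_prop

/-- The integral over `ξ` of the product of the `F i` along the chain from `z` to `0` through
`ξ`; for Lebesgue measures it is the iterated convolution of the `F i`. -/
def chainLIntegral (μ : Fin k → Measure (Euc n)) (F : Fin (k + 1) → Euc n → ℝ≥0∞)
    (z : Euc n) : ℝ≥0∞ :=
  ∫⁻ ξ, ∏ i, F i (chainDiff k z ξ i) ∂(Measure.pi μ)

lemma chainLIntegral_zero (μ : Fin 0 → Measure (Euc n)) (F : Fin 1 → Euc n → ℝ≥0∞) (z : Euc n) :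
    chainLIntegral μ F z = F 0 z := by
  simp [chainLIntegral, chainDiff]

lemma chainLIntegral_mono (μ : Fin k → Measure (Euc n)) {F G : Fin (k + 1) → Euc n → ℝ≥0∞}
    (h : ∀ i x, F i x ≤ G i x) (z : Euc n) : chainLIntegral μ F z ≤ chainLIntegral μ G z :=
  lintegral_mono fun _ ↦ Finset.prod_le_prod' fun i _ ↦ h i _

variable {μ : Fin k → Measure (Euc n)}

lemma measurable_prod_chainDiff {F : Fin (k + 1) → Euc n → ℝ≥0∞} (hF : ∀ i, Measurable (F i)) :
    Measurable fun p : Euc n × (Fin k → Euc n) ↦ ∏ i, F i (chainDiff k p.1 p.2 i) :=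
  Finset.measurable_fun_prod _ fun i _ ↦ (hF i).comp (continuous_chainDiff i).measurable

lemma measurable_prod_chainDiff_right {F : Fin (k + 1) → Euc n → ℝ≥0∞}
    (hF : ∀ i, Measurable (F i)) (z : Euc n) :
    Measurable fun ξ : Fin k → Euc n ↦ ∏ i, F i (chainDiff k z ξ i) :=
  Finset.measurable_fun_prod _ fun i _ ↦
    (hF i).comp ((continuous_chainDiff i).comp (Continuous.prodMk_right z)).measurable

lemma measurable_chainLIntegral [∀ i, SigmaFinite (μ i)] {F : Fin (k + 1) → Euc n → ℝ≥0∞}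
    (hF : ∀ i, Measurable (F i)) : Measurable (chainLIntegral μ F) :=
  (measurable_prod_chainDiff hF).lintegral_prod_right'

lemma chainLIntegral_succ (μ : Fin (k + 1) → Measure (Euc n)) [∀ i, SigmaFinite (μ i)]
    {F : Fin (k + 2) → Euc n → ℝ≥0∞} (hF : ∀ i, Measurable (F i)) (z : Euc n) :
    chainLIntegral μ F z = ∫⁻ x, F 0 (z - x) *
      chainLIntegral (fun i ↦ μ i.succ) (fun i ↦ F i.succ) x ∂(μ 0) := by
  rw [chainLIntegral, lintegral_pi_succ μ (f := fun ξ ↦ ∏ i, F i (chainDiff (k + 1) z ξ i))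
    (measurable_prod_chainDiff_right hF z)]
  refine lintegral_congr fun x ↦ ?_
  simp only [Fin.prod_univ_succ (n := k + 1), chainDiff_cons_zero, chainDiff_cons_succ]
  exact lintegral_const_mul _ (measurable_prod_chainDiff_right (fun i ↦ hF i.succ) x)

lemma lintegral_chainLIntegral_volume {F : Fin (k + 1) → Euc n → ℝ≥0∞}
    (hF : ∀ i, Measurable (F i)) :
    ∫⁻ z, chainLIntegral (fun _ ↦ volume) F z = ∏ i, ∫⁻ x, F i x := by
  induction k with
  | zero => simp [chainLIntegral_zero]
  | succ k ih =>
    have hF0 := hF 0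
    have htail : Measurable (chainLIntegral (fun _ ↦ volume) fun i ↦ F (Fin.succ i)) :=
      measurable_chainLIntegral fun i ↦ hF i.succ
    have translate (x : Euc n) : ∫⁻ z, F 0 (z - x) *
        chainLIntegral (fun _ ↦ volume) (fun i ↦ F i.succ) x =
          (∫⁻ z, F 0 z) * chainLIntegral (fun _ ↦ volume) (fun i ↦ F i.succ) x := by
      rw [lintegral_mul_const _ (by fun_prop), lintegral_sub_right_eq_self (F 0) x]
    simp_rw [chainLIntegral_succ _ hF]
    rw [lintegral_lintegral_swap (by unfold Function.uncurry; fun_prop), Fin.prod_univ_succ,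
      ← ih fun i ↦ hF i.succ, ← lintegral_const_mul _ htail]
    exact lintegral_congr translate

section Schur

variable {h : Euc n → ℝ≥0∞} {A : Fin k → ℝ≥0∞}

lemma lintegral_chainLIntegral_le_mul_prod (hh : Measurable h) (heven : ∀ x, h (-x) = h x)
    [∀ i, SigmaFinite (μ i)] (hA : ∀ i ζ, ∫⁻ x, h (ζ - x) ∂(μ i) ≤ A i)
    (ν : Measure (Euc n)) [SFinite ν] {B : ℝ≥0∞} (hB : ∀ ζ, ∫⁻ x, h (ζ - x) ∂ν ≤ B) :
    ∫⁻ x, chainLIntegral μ (fun _ ↦ h) x ∂ν ≤ B * ∏ i, A i := by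
  induction k generalizing ν B with
  | zero => simpa [chainLIntegral_zero, heven] using hB 0
  | succ k ih =>
    have htail : Measurable (chainLIntegral (fun i ↦ μ (Fin.succ i)) fun _ ↦ h) :=
      measurable_chainLIntegral fun _ ↦ hh
    have inner (y : Euc n) :
        ∫⁻ x, h (x - y) * chainLIntegral (fun i ↦ μ i.succ) (fun _ ↦ h) y ∂ν ≤
          B * chainLIntegral (fun i ↦ μ i.succ) (fun _ ↦ h) y := by
      rw [lintegral_mul_const _ (by fun_prop)]
      gcongr
      simpa only [← heven (y - _), neg_sub] using hB y
    simp_rw [chainLIntegral_succ μ fun _ ↦ hh]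
    rw [lintegral_lintegral_swap (by unfold Function.uncurry; fun_prop)]
    refine (lintegral_mono inner).trans ?_
    rw [lintegral_const_mul _ htail, Fin.prod_univ_succ]
    gcongr
    exact ih (fun i ↦ hA i.succ) (μ 0) (hA 0)

lemma measurable_update_one (hh : Measurable h) (l i : Fin (k + 1)) :
    Measurable (Function.update (fun _ ↦ h) l (1 : Euc n → ℝ≥0∞) i) := by
  rw [Function.update_apply]
  split_ifs
  exacts [measurable_one, hh]

lemma chainLIntegral_update_one_le_prod (hh : Measurable h) (heven : ∀ x, h (-x) = h x)
    [∀ i, SigmaFinite (μ i)] (hA : ∀ i ζ, ∫⁻ x, h (ζ - x) ∂(μ i) ≤ A i) (z : Euc n)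
    (l : Fin (k + 1)) :
    chainLIntegral μ (Function.update (fun _ ↦ h) l 1) z ≤ ∏ i, A i := by
  induction k generalizing z with
  | zero =>
    rw [Fin.fin_one_eq_zero l]
    simp [chainLIntegral_zero]
  | succ k ih =>
    rw [chainLIntegral_succ μ (measurable_update_one hh l), Fin.prod_univ_succ]
    cases l using Fin.cases with
    | zero =>
      simpa [Function.update_apply] using
        lintegral_chainLIntegral_le_mul_prod hh heven (fun i ↦ hA i.succ) (μ 0) (hA 0)
    | succ l =>
      have tail : (fun i : Fin (k + 1) ↦
          Function.update (fun _ : Fin (k + 2) ↦ h) l.succ 1 i.succ) =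
            Function.update (fun _ ↦ h) l 1 :=
        funext fun i ↦ by simp [Function.update_apply]
      calc ∫⁻ x, Function.update (fun _ ↦ h) l.succ 1 0 (z - x) *
            chainLIntegral (fun i ↦ μ i.succ)
              (fun i ↦ Function.update (fun _ ↦ h) l.succ 1 i.succ) x ∂(μ 0)
          ≤ ∫⁻ x, h (z - x) * ∏ i : Fin k, A i.succ ∂(μ 0) := by
            rw [tail, Function.update_of_ne (Fin.succ_ne_zero l).symm]
            gcongr with x
            exact ih (fun i ↦ hA i.succ) x l
        _ ≤ A 0 * ∏ i : Fin k, A i.succ := by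
            rw [lintegral_mul_const _ (by fun_prop)]
            gcongr
            exact hA 0 z

end Schur

end Chain

/-! ### The trace inequality along chains -/

section ChainTrace

variable {n k : ℕ}

/-- The pointwise density of the `s`-th order Sobolev norm, `∑ ‖∂_{a₁}⋯∂_{aₜ} g‖²` over all
tuples of at most `s` coordinate directions, counted with multiplicity `s.choose t`. -/
def sobolevDensity : ℕ → 𝓢(Euc n, ℂ) → Euc n → ℝ≥0∞
  | 0, g, x => ‖g x‖ₑ ^ 2
  | s + 1, g, x => sobolevDensity s g x +
      ∑ a : Fin n, sobolevDensity s (∂_{EuclideanSpace.single a (1 : ℝ)} g) x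

lemma sobolevDensity_succ (s : ℕ) (g : 𝓢(Euc n, ℂ)) (x : Euc n) :
    sobolevDensity (s + 1) g x = sobolevDensity s g x +
      ∑ a : Fin n, sobolevDensity s (∂_{EuclideanSpace.single a (1 : ℝ)} g) x := rfl

@[fun_prop]
lemma measurable_sobolevDensity (s : ℕ) (g : 𝓢(Euc n, ℂ)) : Measurable (sobolevDensity s g) := by
  induction s generalizing g with
  | zero => exact g.continuous.measurable.enorm.pow_const 2
  | succ s ih => exact (ih g).add (Finset.measurable_fun_sum _ fun a _ ↦ ih _)

lemma monotone_sobolevDensity (g : 𝓢(Euc n, ℂ)) (x : Euc n) :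
    Monotone fun s ↦ sobolevDensity s g x :=
  monotone_nat_of_le_succ fun _ ↦ le_self_add

lemma enorm_sq_add_enorm_sq_fderiv_le_sobolevDensity_one (g : 𝓢(Euc n, ℂ)) (x : Euc n)
    (a : Fin n) :
    ‖g x‖ₑ ^ 2 + ‖fderiv ℝ g x (EuclideanSpace.single a 1)‖ₑ ^ 2 ≤ sobolevDensity 1 g x := by
  simp only [sobolevDensity, SchwartzMap.lineDerivOp_apply_eq_fderiv]
  gcongr
  exact Finset.single_le_sum
    (f := fun a ↦ ‖fderiv ℝ g x (EuclideanSpace.single a 1)‖ₑ ^ 2) (fun _ _ ↦ zero_le)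
    (Finset.mem_univ a)

/-- The trace inequality with constant `K` for the measure `μ`, tested on products
`g (z - ·) h (· - y)` of Schwartz functions: integrating against `μ` instead of the Lebesgue
measure costs one derivative on each factor. -/
def HasProductTrace (μ : Measure (Euc n)) (K : ℝ≥0∞) : Prop :=
  ∀ (g h : 𝓢(Euc n, ℂ)) (z y : Euc n),
    ∫⁻ x, sobolevDensity 0 g (z - x) * sobolevDensity 0 h (x - y) ∂μ ≤
      K * ∫⁻ x, sobolevDensity 1 g (z - x) * sobolevDensity 1 h (x - y)

lemma HasProductTrace.sobolevDensity_right {μ : Measure (Euc n)} {K : ℝ≥0∞}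
    (H : HasProductTrace μ K) (s : ℕ) (g h : 𝓢(Euc n, ℂ)) (z y : Euc n) :
    ∫⁻ x, sobolevDensity 0 g (z - x) * sobolevDensity s h (x - y) ∂μ ≤
      K * ∫⁻ x, sobolevDensity 1 g (z - x) * sobolevDensity (s + 1) h (x - y) := by
  have split (h : 𝓢(Euc n, ℂ)) (t u : ℕ) (ν : Measure (Euc n)) :
      ∫⁻ x, sobolevDensity t g (z - x) * sobolevDensity (u + 1) h (x - y) ∂ν =
        ∫⁻ x, sobolevDensity t g (z - x) * sobolevDensity u h (x - y) ∂ν +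
          ∑ a : Fin n, ∫⁻ x, sobolevDensity t g (z - x) *
            sobolevDensity u (∂_{EuclideanSpace.single a (1 : ℝ)} h) (x - y) ∂ν := by
    rw [← lintegral_finsetSum _ fun a _ ↦ by fun_prop, ← lintegral_add_left (by fun_prop)]
    simp_rw [sobolevDensity_succ u, mul_add, Finset.mul_sum]
  induction s generalizing h with
  | zero => exact H g h z y
  | succ s ih =>
    rw [split, split, mul_add, Finset.mul_sum]
    gcongr with a
    · exact ih h
    · exact ih _

lemma measurable_cons_apply {q : Euc n → ℝ≥0∞} (hq : Measurable q) {F : Fin k → Euc n → ℝ≥0∞}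
    (hF : ∀ i, Measurable (F i)) (i : Fin (k + 1)) :
    Measurable ((Fin.cons q F : Fin (k + 1) → Euc n → ℝ≥0∞) i) := by
  cases i using Fin.cases <;> simp [hq, hF]

lemma lintegral_mul_chainLIntegral_cons_le {μ : Measure (Euc n)} [SFinite μ] {K : ℝ≥0∞}
    {p q P Q : Euc n → ℝ≥0∞} (hp : Measurable p) (hq : Measurable q) (hP : Measurable P)
    (hQ : Measurable Q) {z : Euc n}
    (H : ∀ y, ∫⁻ x, p (z - x) * q (x - y) ∂μ ≤ K * ∫⁻ x, P (z - x) * Q (x - y))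
    {F : Fin k → Euc n → ℝ≥0∞} (hF : ∀ i, Measurable (F i)) :
    ∫⁻ x, p (z - x) * chainLIntegral (fun _ ↦ volume) (Fin.cons q F) x ∂μ ≤
      K * ∫⁻ x, P (z - x) * chainLIntegral (fun _ ↦ volume) (Fin.cons Q F) x := by
  cases k with
  | zero => simpa [chainLIntegral_zero] using H 0
  | succ k =>
    have hV : Measurable (chainLIntegral (fun _ ↦ volume) F) := measurable_chainLIntegral hF
    have fubini {p q : Euc n → ℝ≥0∞} (hp : Measurable p) (hq : Measurable q)
        (ν : Measure (Euc n)) [SFinite ν] :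
        ∫⁻ x, p (z - x) * chainLIntegral (fun _ ↦ volume) (Fin.cons q F) x ∂ν =
          ∫⁻ y, (∫⁻ x, p (z - x) * q (x - y) ∂ν) * chainLIntegral (fun _ ↦ volume) F y := by
      simp_rw [chainLIntegral_succ _ (measurable_cons_apply hq hF), Fin.cons_zero, Fin.cons_succ]
      have expand (x : Euc n) :
          p (z - x) * ∫⁻ y, q (x - y) * chainLIntegral (fun _ ↦ volume) F y =
            ∫⁻ y, p (z - x) * q (x - y) * chainLIntegral (fun _ ↦ volume) F y := by
        rw [← lintegral_const_mul _ (by fun_prop)]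
        simp_rw [mul_assoc]
      simp_rw [expand]
      rw [lintegral_lintegral_swap (by unfold Function.uncurry; fun_prop)]
      exact lintegral_congr fun y ↦ lintegral_mul_const _ (by fun_prop)
    rw [fubini hp hq, fubini hP hQ, ← lintegral_const_mul _ ?_]
    · simp_rw [← mul_assoc]
      gcongr with y
      exact H y
    · refine Measurable.mul ?_ hV
      exact Measurable.lintegral_prod_left (f := fun x y ↦ P (z - x) * Q (x - y))
        (by unfold Function.uncurry; fun_prop)

lemma chainLIntegral_sobolevDensity_zero_le_cons {μ : Fin k → Measure (Euc n)}
    [∀ i, SigmaFinite (μ i)] {K : ℝ≥0∞} (H : ∀ i, HasProductTrace (μ i) K)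
    (g : Fin (k + 1) → 𝓢(Euc n, ℂ)) (z : Euc n) :
    chainLIntegral μ (fun i ↦ sobolevDensity 0 (g i)) z ≤
      K ^ k * chainLIntegral (fun _ ↦ volume)
        (Fin.cons (sobolevDensity 1 (g 0)) fun i ↦ sobolevDensity 2 (g i.succ)) z := by
  induction k generalizing z with
  | zero =>
    simpa [chainLIntegral_zero] using monotone_sobolevDensity (g 0) z zero_le_one
  | succ k ih =>
    have hmeas : Measurable (chainLIntegral (fun _ ↦ volume) (Fin.cons (sobolevDensity 1 (g 1))
        fun i ↦ sobolevDensity 2 (g i.succ.succ) : Fin (k + 1) → Euc n → ℝ≥0∞)) :=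
      measurable_chainLIntegral <| measurable_cons_apply (by fun_prop) fun i ↦ by fun_prop
    rw [chainLIntegral_succ μ fun i ↦ measurable_sobolevDensity 0 (g i),
      chainLIntegral_succ _ <| measurable_cons_apply (by fun_prop) fun i ↦ by fun_prop]
    calc _ ≤ ∫⁻ x, K ^ k * (sobolevDensity 0 (g 0) (z - x) * chainLIntegral (fun _ ↦ volume)
            (Fin.cons (sobolevDensity 1 (g 1)) fun i ↦ sobolevDensity 2 (g i.succ.succ)) x)
            ∂(μ 0) := by
          simp_rw [mul_left_comm (K ^ k)]
          gcongr
          exact ih (fun i ↦ H i.succ) (fun i ↦ g i.succ) x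
      _ = K ^ k * ∫⁻ x, sobolevDensity 0 (g 0) (z - x) * chainLIntegral (fun _ ↦ volume)
            (Fin.cons (sobolevDensity 1 (g 1)) fun i ↦ sobolevDensity 2 (g i.succ.succ)) x
            ∂(μ 0) := lintegral_const_mul _ (by fun_prop)
      _ ≤ K ^ k * (K * ∫⁻ x, sobolevDensity 1 (g 0) (z - x) * chainLIntegral (fun _ ↦ volume)
            (Fin.cons (sobolevDensity 2 (g 1)) fun i ↦ sobolevDensity 2 (g i.succ.succ)) x) := by
          gcongr
          exact lintegral_mul_chainLIntegral_cons_le (by fun_prop) (by fun_prop) (by fun_prop)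
            (by fun_prop) (fun y ↦ (H 0).sobolevDensity_right 1 _ _ z y) fun i ↦ by fun_prop
      _ = _ := by
          rw [pow_succ, mul_assoc]
          simp only [Fin.cons_zero, Fin.cons_succ]
          congr! 6
          funext i
          cases i using Fin.cases <;> rfl

lemma chainLIntegral_sobolevDensity_zero_le {μ : Fin k → Measure (Euc n)}
    [∀ i, SigmaFinite (μ i)] {K : ℝ≥0∞} (H : ∀ i, HasProductTrace (μ i) K)
    (g : Fin (k + 1) → 𝓢(Euc n, ℂ)) (z : Euc n) :
    chainLIntegral μ (fun i ↦ sobolevDensity 0 (g i)) z ≤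
      K ^ k * chainLIntegral (fun _ ↦ volume) (fun i ↦ sobolevDensity 2 (g i)) z := by
  refine (chainLIntegral_sobolevDensity_zero_le_cons H g z).trans ?_
  gcongr
  refine chainLIntegral_mono _ (fun i x ↦ ?_) z
  cases i using Fin.cases with
  | zero => exact monotone_sobolevDensity (g 0) x one_le_two
  | succ i => exact le_rfl

end ChainTrace

section SphereTrace

variable {m : ℕ}

lemma enorm_add_sq_le {E : Type*} [NormedAddCommGroup E] (a b : E) :
    ‖a + b‖ₑ ^ 2 ≤ 2 * (‖a‖ₑ ^ 2 + ‖b‖ₑ ^ 2) := by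
  refine (pow_le_pow_left' (enorm_add_le a b) 2).trans ?_
  simp only [enorm_eq_nnnorm]
  exact_mod_cast add_sq_le (a := ‖a‖₊) (b := ‖b‖₊)

lemma fderiv_mul_comp_sub (g h : 𝓢(Euc m, ℂ)) (z y x v : Euc m) :
    fderiv ℝ (fun x ↦ g (z - x) * h (x - y)) x v =
      g (z - x) * fderiv ℝ h (x - y) v + -fderiv ℝ g (z - x) v * h (x - y) := by
  have hg : HasFDerivAt (fun x ↦ g (z - x)) (-fderiv ℝ g (z - x)) x := by
    simpa [Function.comp_def] using
      g.differentiableAt.hasFDerivAt.comp x ((hasFDerivAt_id x).const_sub z)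
  have hh : HasFDerivAt (fun x ↦ h (x - y)) (fderiv ℝ h (x - y)) x := by
    simpa [Function.comp_def] using
      h.differentiableAt.hasFDerivAt.comp x ((hasFDerivAt_id x).sub_const y)
  rw [show fderiv ℝ (fun x ↦ g (z - x) * h (x - y)) x = _ from (hg.mul hh).fderiv]
  simp [mul_comm]

lemma enorm_sq_mul_add_enorm_sq_fderiv_le (g h : 𝓢(Euc m, ℂ)) (z y x : Euc m) (a : Fin m) :
    ‖g (z - x) * h (x - y)‖ₑ ^ 2 +
        ‖fderiv ℝ (fun x ↦ g (z - x) * h (x - y)) x (EuclideanSpace.single a 1)‖ₑ ^ 2 ≤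
      2 * (sobolevDensity 1 g (z - x) * sobolevDensity 1 h (x - y)) := by
  refine le_trans ?_ (mul_le_mul_right (mul_le_mul'
    (enorm_sq_add_enorm_sq_fderiv_le_sobolevDensity_one g (z - x) a)
    (enorm_sq_add_enorm_sq_fderiv_le_sobolevDensity_one h (x - y) a)) 2)
  rw [fderiv_mul_comp_sub]
  refine (add_le_add le_rfl (enorm_add_sq_le _ _)).trans ?_
  simp only [enorm_mul, enorm_neg, mul_pow]
  generalize ‖g (z - x)‖ₑ ^ 2 = p, ‖h (x - y)‖ₑ ^ 2 = q,
    ‖fderiv ℝ g (z - x) _‖ₑ ^ 2 = p', ‖fderiv ℝ h (x - y) _‖ₑ ^ 2 = q'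
  calc p * q + 2 * (p * q' + p' * q)
      ≤ p * q + 2 * (p * q' + p' * q) + (p * q + 2 * (p' * q')) := le_self_add
    _ = 2 * ((p + p') * (q + q')) := by ring

lemma hasProductTrace_sphere (c : Euc (m + 1)) {R : ℝ} (hR : 0 < R) :
    HasProductTrace (Measure.hausdorffMeasure (m : ℝ) |>.restrict (Metric.sphere c R))
      (sphereConst m * ((m + 1) * 2)) := by
  intro g h z y
  have smooth : ContDiff ℝ 1 fun x ↦ g (z - x) * h (x - y) :=
    ((g.smooth 1).comp (contDiff_const.sub contDiff_id)).mul
      ((h.smooth 1).comp (contDiff_id.sub contDiff_const))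
  have vanish : Tendsto (fun x ↦ g (z - x) * h (x - y)) (cocompact (Euc (m + 1))) (𝓝 0) := by
    simpa using ((zero_at_infty g).comp
      (Homeomorph.subLeft z).isClosedEmbedding.tendsto_cocompact).mul
      ((zero_at_infty h).comp (Homeomorph.subRight y).isClosedEmbedding.tendsto_cocompact)
  calc ∫⁻ x in Metric.sphere c R, sobolevDensity 0 g (z - x) * sobolevDensity 0 h (x - y)
        ∂Measure.hausdorffMeasure (m : ℝ)
      = ∫⁻ x in Metric.sphere c R, ‖g (z - x) * h (x - y)‖ₑ ^ 2
          ∂Measure.hausdorffMeasure (m : ℝ) := by simp only [sobolevDensity, enorm_mul, mul_pow]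
    _ ≤ sphereConst m * ∑ a, ∫⁻ x, (‖g (z - x) * h (x - y)‖ₑ ^ 2 +
          ‖fderiv ℝ (fun x ↦ g (z - x) * h (x - y)) x (EuclideanSpace.single a 1)‖ₑ ^ 2) :=
        lintegral_sphere_enorm_sq_le c hR smooth vanish
    _ ≤ sphereConst m * ∑ a : Fin (m + 1),
          2 * ∫⁻ x, sobolevDensity 1 g (z - x) * sobolevDensity 1 h (x - y) := by
        simp_rw [← lintegral_const_mul' 2 _ ENNReal.ofNat_ne_top]
        gcongr with a _ x
        exact enorm_sq_mul_add_enorm_sq_fderiv_le g h z y x a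
    _ = _ := by
        simp [mul_assoc]

end SphereTrace

/-! ### Weighted Sobolev norms on the Fourier side -/

section Fourier

variable {n : ℕ}

lemma eLpNorm_two_sq {E F : Type*} [MeasurableSpace E] [NormedAddCommGroup F] (u : E → F)
    (μ : Measure E) : eLpNorm u 2 μ ^ 2 = ∫⁻ x, ‖u x‖ₑ ^ 2 ∂μ := by
  simpa using eLpNorm_nnreal_pow_eq_lintegral (f := u) (μ := μ) (two_ne_zero (α := ℝ≥0))

lemma lintegral_enorm_sq_fourier (H : 𝓢(Euc n, ℂ)) :
    ∫⁻ ξ, ‖(𝓕 H : 𝓢(Euc n, ℂ)) ξ‖ₑ ^ 2 = ∫⁻ x, ‖H x‖ₑ ^ 2 := by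
  have h : eLpNorm (𝓕 H : 𝓢(Euc n, ℂ)) 2 volume = eLpNorm H 2 volume := by
    rw [← Lp.enorm_toLp ((𝓕 H).memLp 2 volume), ← Lp.enorm_toLp (H.memLp 2 volume)]
    exact enorm_eq_iff_norm_eq.2 H.norm_fourier_toL2_eq
  rw [← eLpNorm_two_sq, ← eLpNorm_two_sq, h]

lemma lintegral_eq_mul_lintegral_comp_smul {r : ℝ} (hr : 0 < r) {F : Euc n → ℝ≥0∞}
    (hF : Measurable F) : ∫⁻ x, F x = ENNReal.ofReal (r ^ n) * ∫⁻ x, F (r • x) := by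
  rw [← lintegral_map hF (measurable_const_smul r), Measure.map_addHaar_smul _ hr.ne',
    lintegral_smul_measure, smul_eq_mul, ← mul_assoc, ← ENNReal.ofReal_mul (by positivity),
    finrank_euclideanSpace_fin, abs_of_pos (by positivity), mul_inv_cancel₀ (by positivity),
    ENNReal.ofReal_one, one_mul]

lemma enorm_sq_eq_sum (x : Euc n) : ‖x‖ₑ ^ 2 = ∑ a, ‖x a‖ₑ ^ 2 := by
  simp only [enorm_eq_nnnorm]
  exact_mod_cast NNReal.eq (by push_cast; exact EuclideanSpace.norm_sq_eq x)

lemma enorm_jap_sq (x : Euc n) : ‖jap x‖ₑ ^ 2 = 1 + ‖x‖ₑ ^ 2 := by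
  rw [Real.enorm_of_nonneg (jap_pos x).le, ← ofReal_norm x, ← ENNReal.ofReal_pow (norm_nonneg x),
    ← ENNReal.ofReal_pow (jap_pos x).le, jap, Real.sq_sqrt (by positivity),
    ENNReal.ofReal_add zero_le_one (by positivity), ENNReal.ofReal_one]

lemma enorm_smulLeftCLM_inner_single (H : 𝓢(Euc n, ℂ)) (a : Fin n) (x : Euc n) :
    ‖(-(2 * (Real.pi : ℂ) * Complex.I) • SchwartzMap.smulLeftCLM ℂ
      (fun x : Euc n ↦ inner ℝ x (EuclideanSpace.single a (1 : ℝ))) H) x‖ₑ =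
      ‖((2 * Real.pi) • x) a‖ₑ * ‖H x‖ₑ := by
  rw [smul_apply, SchwartzMap.smulLeftCLM_apply_apply (by fun_prop),
    EuclideanSpace.inner_single_right]
  have hI : ‖Complex.I‖ₑ = 1 := by simp [← ofReal_norm]
  have hreal (t : ℝ) : ‖(t : ℂ)‖ₑ = ‖t‖ₑ := by simp [← ofReal_norm]
  have h2 : ‖(2 : ℂ)‖ₑ = ‖(2 : ℝ)‖ₑ := hreal 2
  simp [enorm_mul, mul_assoc, hI, hreal, h2]

lemma lintegral_sobolevDensity_fourier (s : ℕ) (H : 𝓢(Euc n, ℂ)) :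
    ∫⁻ ξ, sobolevDensity s (𝓕 H) ξ =
      ∫⁻ x, (‖jap ((2 * Real.pi) • x)‖ₑ ^ 2) ^ s * ‖H x‖ₑ ^ 2 := by
  induction s generalizing H with
  | zero => simpa [sobolevDensity] using lintegral_enorm_sq_fourier H
  | succ s ih =>
    simp_rw [sobolevDensity_succ]
    rw [lintegral_add_left (by fun_prop), lintegral_finsetSum _ fun a _ ↦ by fun_prop]
    simp_rw [SchwartzMap.lineDerivOp_fourier_eq, ih]
    rw [← lintegral_finsetSum _ fun a _ ↦ by fun_prop, ← lintegral_add_left (by fun_prop)]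
    refine lintegral_congr fun x ↦ ?_
    simp_rw [enorm_smulLeftCLM_inner_single, mul_pow, ← Finset.mul_sum, ← Finset.sum_mul,
      ← enorm_sq_eq_sum]
    rw [pow_succ (_ ^ 2) s, enorm_jap_sq]
    ring

lemma ft_eq_fourier (f : 𝓢(Euc n, ℂ)) (ξ : Euc n) :
    ft f ξ = (𝓕 f : 𝓢(Euc n, ℂ)) ((2 * Real.pi)⁻¹ • ξ) := by
  rw [SchwartzMap.fourier_coe, Real.fourier_eq', ft]
  congr! 4 with x
  rw [inner_smul_right, real_inner_comm]
  have hπ : (Real.pi : ℂ) ≠ 0 := mod_cast Real.pi_ne_zero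
  push_cast
  field_simp

/-- `⟨·⟩^β f̂` as a Schwartz function. -/
def weightedFourier (β : ℝ) (f : 𝓢(Euc n, ℂ)) : 𝓢(Euc n, ℂ) :=
  SchwartzMap.smulLeftCLM ℂ (fun ξ : Euc n ↦ (1 + ‖ξ‖ ^ 2) ^ (β / 2))
    (SchwartzMap.compCLMOfContinuousLinearEquiv ℂ
      (ContinuousLinearEquiv.smulLeft (M₁ := Euc n)
        (Units.mk0 (2 * Real.pi)⁻¹ (inv_ne_zero Real.two_pi_pos.ne')))
      (𝓕 f))

lemma weightedFourier_apply (β : ℝ) (f : 𝓢(Euc n, ℂ)) (ξ : Euc n) :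
    weightedFourier β f ξ = ((jap ξ ^ β : ℝ) : ℂ) * ft f ξ := by
  have hjap : jap ξ ^ β = (1 + ‖ξ‖ ^ 2) ^ (β / 2) := by
    rw [jap, Real.sqrt_eq_rpow, ← Real.rpow_mul (by positivity)]
    ring_nf
  rw [weightedFourier, SchwartzMap.smulLeftCLM_apply_apply
    (Function.hasTemperateGrowth_one_add_norm_sq_rpow _ _), ft_eq_fourier, hjap]
  rfl

lemma besselD_eq_fourierInv (β : ℝ) (f : 𝓢(Euc n, ℂ)) (x : Euc n) :
    besselD β f x = ((2 * Real.pi) ^ n)⁻¹ •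
      (𝓕⁻ (weightedFourier β f) : 𝓢(Euc n, ℂ)) ((2 * Real.pi)⁻¹ • x) := by
  rw [SchwartzMap.fourierInv_coe, Real.fourierInv_eq', besselD]
  congr! 4 with ξ
  · rw [inner_smul_right]
    have hπ : (Real.pi : ℂ) ≠ 0 := mod_cast Real.pi_ne_zero
    push_cast
    field_simp
  · exact (weightedFourier_apply β f ξ).symm

lemma lintegral_sobolevDensity_weightedFourier (s : ℕ) (β : ℝ) (f : 𝓢(Euc n, ℂ)) :
    ∫⁻ ξ, sobolevDensity s (weightedFourier β f) ξ =
      ENNReal.ofReal ((2 * Real.pi) ^ n) * wSobNorm β s f ^ 2 := by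
  set H : 𝓢(Euc n, ℂ) := 𝓕⁻ (weightedFourier β f)
  have hbessel (x : Euc n) :
      ‖besselD β f ((2 * Real.pi) • x)‖ₑ = ENNReal.ofReal ((2 * Real.pi) ^ n)⁻¹ * ‖H x‖ₑ := by
    rw [besselD_eq_fourierInv, smul_smul, inv_mul_cancel₀ Real.two_pi_pos.ne', one_smul,
      enorm_smul, Real.enorm_of_nonneg (by positivity)]
  have hweight (x : Euc n) : ‖jap x ^ (s : ℝ)‖ₑ ^ 2 = (‖jap x‖ₑ ^ 2) ^ s := by
    rw [Real.rpow_natCast, enorm_pow, pow_right_comm]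
  have hcont : Continuous (besselD β f) := by
    simp_rw [funext (besselD_eq_fourierInv β f)]
    fun_prop
  have hmeas : Measurable fun x ↦ ‖jap x ^ (s : ℝ) • besselD β f x‖ₑ ^ 2 := by
    simp_rw [Real.rpow_natCast]
    fun_prop
  have hconst : ENNReal.ofReal ((2 * Real.pi) ^ n) * ENNReal.ofReal ((2 * Real.pi) ^ n)⁻¹ = 1 := by
    rw [← ENNReal.ofReal_mul (by positivity), mul_inv_cancel₀ (by positivity), ENNReal.ofReal_one]
  rw [wSobNorm, eLpNorm_two_sq, lintegral_eq_mul_lintegral_comp_smul Real.two_pi_pos hmeas,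
    ← show 𝓕 H = weightedFourier β f from FourierTransform.fourier_fourierInv_eq _,
    lintegral_sobolevDensity_fourier, ← mul_assoc,
    ← lintegral_const_mul' _ _ (by finiteness)]
  refine lintegral_congr fun x ↦ ?_
  rw [enorm_smul, hbessel, mul_pow ‖jap _ ^ _‖ₑ, mul_pow (ENNReal.ofReal _), hweight]
  generalize ENNReal.ofReal ((2 * Real.pi) ^ n) = c, ENNReal.ofReal ((2 * Real.pi) ^ n)⁻¹ = c'
    at hconst
  calc (‖jap ((2 * Real.pi) • x)‖ₑ ^ 2) ^ s * ‖H x‖ₑ ^ 2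
      = (c * c') ^ 2 * ((‖jap ((2 * Real.pi) • x)‖ₑ ^ 2) ^ s * ‖H x‖ₑ ^ 2) := by
        rw [hconst, one_pow, one_mul]
    _ = c * c * ((‖jap ((2 * Real.pi) • x)‖ₑ ^ 2) ^ s * (c' ^ 2 * ‖H x‖ₑ ^ 2)) := by ring

end Fourier

/-! ### Chain integrals with Japanese bracket weights -/

section Weights

variable {n k : ℕ}

lemma exists_jap_le_mul_jap_chainDiff (z : Euc n) (ξ : Fin k → Euc n) :
    ∃ l, jap z ≤ (k + 1) * jap (chainDiff k z ξ l) := by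
  obtain ⟨l, hl⟩ := Finite.exists_max fun i ↦ ‖chainDiff k z ξ i‖
  have hz : ‖z‖ ≤ (k + 1) * ‖chainDiff k z ξ l‖ := calc
    ‖z‖ = ‖∑ i, chainDiff k z ξ i‖ := by rw [sum_chainDiff]
    _ ≤ ∑ i, ‖chainDiff k z ξ i‖ := norm_sum_le _ _
    _ ≤ ∑ _ : Fin (k + 1), ‖chainDiff k z ξ l‖ := Finset.sum_le_sum fun i _ ↦ hl i
    _ = (k + 1) * ‖chainDiff k z ξ l‖ := by simp
  refine ⟨l, ?_⟩
  unfold jap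
  rw [Real.sqrt_le_left (by positivity), mul_pow, Real.sq_sqrt (by positivity)]
  have hz2 : ‖z‖ ^ 2 ≤ ((k + 1) * ‖chainDiff k z ξ l‖) ^ 2 := by gcongr
  nlinarith [Nat.cast_nonneg (α := ℝ) k]

lemma exists_japWeight_mul_prod_le {β b : ℝ} (hβ : 0 ≤ β) (hb : b ≤ β)
    (G : Fin (k + 1) → Euc n → ℝ≥0∞) (z : Euc n) (ξ : Fin k → Euc n) :
    ∃ l, japWeight β z * ∏ i, G i (chainDiff k z ξ i) ≤ ENNReal.ofReal ((k + 1) ^ β) *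
      ((∏ i, Function.update (fun _ ↦ japWeight (-b)) l 1 i (chainDiff k z ξ i)) *
        ∏ i, japWeight β (chainDiff k z ξ i) * G i (chainDiff k z ξ i)) := by
  obtain ⟨l, hl⟩ := exists_jap_le_mul_jap_chainDiff z ξ
  have hz : japWeight β z ≤ ENNReal.ofReal ((k + 1) ^ β) * japWeight β (chainDiff k z ξ l) := by
    rw [japWeight, japWeight, ← ENNReal.ofReal_mul (by positivity),
      ← Real.mul_rpow (by positivity) (jap_pos _).le]
    exact ENNReal.ofReal_le_ofReal (Real.rpow_le_rpow (jap_pos z).le hl hβ)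
  have hprod : japWeight β (chainDiff k z ξ l) ≤
      ∏ i, Function.update (fun _ ↦ japWeight (-b)) l 1 i (chainDiff k z ξ i) *
        japWeight β (chainDiff k z ξ i) := by
    rw [← Finset.mul_prod_erase _ _ (Finset.mem_univ l), Function.update_self, Pi.one_apply,
      one_mul]
    refine le_mul_of_one_le_right' (Finset.one_le_prod' fun i hi ↦ ?_)
    rw [Function.update_of_ne (Finset.ne_of_mem_erase hi), ← japWeight_add]
    exact one_le_japWeight (by linarith) _
  refine ⟨l, ?_⟩
  calc japWeight β z * ∏ i, G i (chainDiff k z ξ i)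
      ≤ ENNReal.ofReal ((k + 1) ^ β) *
          (∏ i, Function.update (fun _ ↦ japWeight (-b)) l 1 i (chainDiff k z ξ i) *
            japWeight β (chainDiff k z ξ i)) * ∏ i, G i (chainDiff k z ξ i) := by
        grw [hz, hprod]
    _ = _ := by simp only [Finset.prod_mul_distrib, mul_assoc]

lemma sq_lintegral_mul_le {α : Type*} [MeasurableSpace α] (μ : Measure α)
    {u v : α → ℝ≥0∞} (hu : Measurable u) (hv : Measurable v) :
    (∫⁻ x, u x * v x ∂μ) ^ 2 ≤ (∫⁻ x, u x ^ 2 ∂μ) * ∫⁻ x, v x ^ 2 ∂μ := by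
  have h := ENNReal.lintegral_mul_le_Lp_mul_Lq μ Real.HolderConjugate.two_two
    hu.aemeasurable hv.aemeasurable
  simp only [Pi.mul_apply, ENNReal.rpow_ofNat] at h
  rw [← ENNReal.mul_rpow_of_nonneg _ _ (by norm_num), one_div] at h
  exact_mod_cast (ENNReal.le_rpow_inv_iff two_pos).1 h

variable {β b : ℝ} {μ : Fin k → Measure (Euc n)} {G : Fin (k + 1) → Euc n → ℝ≥0∞}

lemma exists_japWeight_mul_chainLIntegral_le (hβ : 0 ≤ β) (hb : b ≤ β)
    (hG : ∀ i, Measurable (G i)) (z : Euc n) :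
    ∃ l, japWeight β z * chainLIntegral μ G z ≤ ENNReal.ofReal ((k + 1) ^ β) * ((k + 1) *
      ∫⁻ ξ, (∏ i, Function.update (fun _ ↦ japWeight (-b)) l 1 i (chainDiff k z ξ i)) *
        ∏ i, japWeight β (chainDiff k z ξ i) * G i (chainDiff k z ξ i) ∂(Measure.pi μ)) := by
  let u (l : Fin (k + 1)) (ξ : Fin k → Euc n) : ℝ≥0∞ :=
    (∏ i, Function.update (fun _ ↦ japWeight (-b)) l 1 i (chainDiff k z ξ i)) *
      ∏ i, japWeight β (chainDiff k z ξ i) * G i (chainDiff k z ξ i)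
  have hu (l) : Measurable (u l) :=
    (measurable_prod_chainDiff_right (measurable_update_one (measurable_japWeight _) l) z).mul
      (measurable_prod_chainDiff_right (F := fun i x ↦ japWeight β x * G i x) (by fun_prop) z)
  obtain ⟨l, hl⟩ := Finite.exists_max fun l ↦ ∫⁻ ξ, u l ξ ∂(Measure.pi μ)
  refine ⟨l, ?_⟩
  calc japWeight β z * chainLIntegral μ G z
      = ∫⁻ ξ, japWeight β z * ∏ i, G i (chainDiff k z ξ i) ∂(Measure.pi μ) :=
        (lintegral_const_mul' _ _ ENNReal.ofReal_ne_top).symm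
    _ ≤ ∫⁻ ξ, ENNReal.ofReal ((k + 1) ^ β) * ∑ l, u l ξ ∂(Measure.pi μ) := by
        refine lintegral_mono fun ξ ↦ ?_
        obtain ⟨l, hl⟩ := exists_japWeight_mul_prod_le hβ hb G z ξ
        grw [hl, ← Finset.single_le_sum (f := fun l ↦ u l ξ) (fun _ _ ↦ zero_le)
          (Finset.mem_univ l)]
    _ = ENNReal.ofReal ((k + 1) ^ β) * ∑ l, ∫⁻ ξ, u l ξ ∂(Measure.pi μ) := by
        rw [lintegral_const_mul' _ _ ENNReal.ofReal_ne_top, lintegral_finsetSum _ fun l _ ↦ hu l]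
    _ ≤ ENNReal.ofReal ((k + 1) ^ β) * ((k + 1) * ∫⁻ ξ, u l ξ ∂(Measure.pi μ)) := by
        grw [Finset.sum_le_card_nsmul _ _ _ fun l _ ↦ hl l]
        simp

lemma sq_japWeight_mul_chainLIntegral_le [∀ i, SigmaFinite (μ i)] (hβ : 0 ≤ β) (hb : b ≤ β)
    {A : Fin k → ℝ≥0∞} (hA : ∀ i ζ, ∫⁻ x, japWeight (-(2 * b)) (ζ - x) ∂(μ i) ≤ A i)
    (hG : ∀ i, Measurable (G i)) (z : Euc n) :
    (japWeight β z * chainLIntegral μ G z) ^ 2 ≤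
      (ENNReal.ofReal ((k + 1) ^ β) * (k + 1)) ^ 2 * ((∏ i, A i) *
        chainLIntegral μ (fun i x ↦ (japWeight β x * G i x) ^ 2) z) := by
  obtain ⟨l, hl⟩ := exists_japWeight_mul_chainLIntegral_le (μ := μ) hβ hb hG z
  have hsq (i : Fin (k + 1)) (x : Euc n) :
      Function.update (fun _ ↦ japWeight (-b)) l 1 i x ^ 2 =
        Function.update (fun _ ↦ japWeight (-(2 * b))) l 1 i x := by
    simp only [Function.update_apply]
    split_ifs
    · simp
    · rw [japWeight_sq, mul_neg]
  grw [hl, ← mul_assoc, mul_pow, sq_lintegral_mul_le _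
    (measurable_prod_chainDiff_right (measurable_update_one (measurable_japWeight _) l) z)
    (measurable_prod_chainDiff_right (F := fun i x ↦ japWeight β x * G i x) (by fun_prop) z)]
  simp only [← Finset.prod_pow, hsq]
  gcongr
  · exact chainLIntegral_update_one_le_prod (measurable_japWeight _)
      (fun x ↦ by simp [japWeight, jap]) hA z l
  · rfl

lemma enorm_weightedFourier (β : ℝ) (f : 𝓢(Euc n, ℂ)) (ξ : Euc n) :
    ‖weightedFourier β f ξ‖ₑ = japWeight β ξ * ‖ft f ξ‖ₑ := by
  have : 0 ≤ jap ξ ^ β := Real.rpow_nonneg (jap_pos ξ).le β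
  rw [weightedFourier_apply, enorm_mul, ← ofReal_norm, Complex.norm_of_nonneg this, japWeight]

lemma measurable_ft (f : 𝓢(Euc n, ℂ)) : Measurable (ft f) := by
  simp_rw [funext (ft_eq_fourier f)]
  exact (by fun_prop : Continuous fun ξ ↦ (𝓕 f : 𝓢(Euc n, ℂ)) ((2 * Real.pi)⁻¹ • ξ)).measurable

lemma sq_japWeight_mul_chainLIntegral_ft_le [∀ i, SigmaFinite (μ i)] (hβ : 0 ≤ β) (hb : b ≤ β)
    {A : Fin k → ℝ≥0∞} (hA : ∀ i ζ, ∫⁻ x, japWeight (-(2 * b)) (ζ - x) ∂(μ i) ≤ A i) {K : ℝ≥0∞}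
    (hK : ∀ i, HasProductTrace (μ i) K) (f : Fin (k + 1) → 𝓢(Euc n, ℂ)) (z : Euc n) :
    (japWeight β z * chainLIntegral μ (fun i x ↦ ‖ft (f i) x‖ₑ) z) ^ 2 ≤
      (ENNReal.ofReal ((k + 1) ^ β) * (k + 1)) ^ 2 * ((∏ i, A i) * (K ^ k *
        chainLIntegral (fun _ ↦ volume)
          (fun i ↦ sobolevDensity 2 (weightedFourier β (f i))) z)) := by
  refine (sq_japWeight_mul_chainLIntegral_le hβ hb hA
    (fun i ↦ (measurable_ft (f i)).enorm) z).trans ?_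
  simp_rw [← enorm_weightedFourier]
  gcongr
  exact chainLIntegral_sobolevDensity_zero_le hK (fun i ↦ weightedFourier β (f i)) z

end Weights

/-! ### Ewald spheres -/

section Ewald

variable {m k : ℕ}

lemma ewaldM_succ (r : ℝ) (η : Euc (m + 1)) :
    ewaldM (m + 1) r η = (Measure.hausdorffMeasure (m : ℝ)).restrict
      (Metric.sphere ((2 : ℝ)⁻¹ • η) (r * ‖η‖ / 2)) := by
  rw [ewaldM, Nat.cast_add_one, add_sub_cancel_right]

lemma isFiniteMeasure_ewaldM {r : ℝ} (hr : 0 < r) {η : Euc (m + 1)} (hη : η ≠ 0) :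
    IsFiniteMeasure (ewaldM (m + 1) r η) := by
  rw [ewaldM_succ, isFiniteMeasure_restrict]
  exact (hausdorffMeasure_sphere_lt_top _ (by positivity)).ne

lemma hasProductTrace_ewaldM {r : ℝ} (hr : 0 < r) {η : Euc (m + 1)} (hη : η ≠ 0) :
    HasProductTrace (ewaldM (m + 1) r η) (sphereConst m * ((m + 1) * 2)) := by
  rw [ewaldM_succ]
  exact hasProductTrace_sphere _ (by positivity)

lemma exists_lintegral_ewaldM_japWeight_le {lam : ℝ} (h0 : 0 < lam) (hm : lam ≤ m / 2) :
    ∃ C : ℝ≥0, ∀ r, 0 < r → ∀ η : Euc (m + 1), η ≠ 0 → ∀ ζ,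
      ∫⁻ x, japWeight (-(2 * (m / 2 - lam))) (ζ - x) ∂(ewaldM (m + 1) r η) ≤
        C * (ENNReal.ofReal ((1 + r) ^ lam) * ENNReal.ofReal (‖η‖ ^ lam)) ^ 2 := by
  obtain ⟨C, hC, H⟩ := exists_setLIntegral_sphere_japWeight_neg_le (m := m)
    (b := 2 * (m / 2 - lam)) (by linarith) (by linarith)
  refine ⟨C.toNNReal, fun r hr η hη ζ ↦ ?_⟩
  have hη' : 0 < ‖η‖ := norm_pos_iff.2 hη
  have hradius : r * ‖η‖ / 2 ≤ (1 + r) * ‖η‖ := by nlinarith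
  rw [ewaldM_succ]
  calc _ ≤ ENNReal.ofReal (C * (r * ‖η‖ / 2) ^ (m - 2 * (m / 2 - lam))) :=
        H _ _ (by positivity) ζ
    _ ≤ ENNReal.ofReal (C * ((1 + r) * ‖η‖) ^ (m - 2 * (m / 2 - lam))) := by
        gcongr
        linarith
    _ = _ := by
        rw [show (m : ℝ) - 2 * (m / 2 - lam) = lam * (2 : ℕ) by push_cast; ring,
          Real.rpow_mul_natCast (by positivity), Real.mul_rpow (by positivity) (by positivity),
          ENNReal.ofReal_mul hC, ENNReal.ofReal_pow (by positivity),
          ENNReal.ofReal_mul (by positivity)]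
        rfl

lemma enorm_Kj_le {n : ℕ} (r : Fin k → ℝ) (g : Fin (k + 1) → Euc n → ℂ) (η : Euc n) :
    ‖Kj k r g η‖ₑ ≤ ENNReal.ofReal (‖η‖ ^ (-(k : ℝ))) *
      chainLIntegral (fun i ↦ ewaldM n (r i) η) (fun i x ↦ ‖g i x‖ₑ) η := by
  rw [Kj, enorm_mul, Real.enorm_of_nonneg (by positivity)]
  gcongr
  refine (enorm_integral_le_lintegral_enorm _).trans_eq (lintegral_congr fun ξ ↦ ?_)
  rw [Real.enorm_of_nonneg (by positivity), ENNReal.ofReal_prod_of_nonneg fun _ _ ↦ norm_nonneg _]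
  simp only [ofReal_norm]

lemma jap_rpow_mul_norm_rpow_le {n : ℕ} {C₀ s lam : ℝ} (hC₀ : 0 < C₀) (h1 : lam < 1)
    (hs : s ≤ k * (1 - lam)) {η : Euc n} (hη : C₀ ≤ ‖η‖) :
    jap η ^ s * ‖η‖ ^ (-(k : ℝ)) * (‖η‖ ^ lam) ^ k ≤ (1 + C₀⁻¹) ^ (k * (1 - lam)) := by
  have hη0 : 0 < ‖η‖ := hC₀.trans_le hη
  have hjap : jap η ≤ (1 + C₀⁻¹) * ‖η‖ := by
    have hone : 1 ≤ C₀⁻¹ * ‖η‖ := by rwa [← div_eq_inv_mul, one_le_div hC₀]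
    exact Real.sqrt_le_iff.2 ⟨by positivity, by nlinarith⟩
  have : 0 ≤ 1 - lam := sub_nonneg.2 h1.le
  calc jap η ^ s * ‖η‖ ^ (-(k : ℝ)) * (‖η‖ ^ lam) ^ k
      ≤ ((1 + C₀⁻¹) * ‖η‖) ^ (k * (1 - lam)) * ‖η‖ ^ (-(k : ℝ)) * (‖η‖ ^ lam) ^ k := by
        gcongr
        exact (Real.rpow_le_rpow_of_exponent_le (one_le_jap η) hs).trans
          (Real.rpow_le_rpow (jap_pos η).le hjap (by positivity))
    _ = (1 + C₀⁻¹) ^ (k * (1 - lam)) * ‖η‖ ^ (k * (1 - lam) + -(k : ℝ) + lam * k) := by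
        rw [Real.mul_rpow (by positivity) hη0.le, Real.rpow_add hη0, Real.rpow_add hη0,
          Real.rpow_mul_natCast hη0.le]
        ring
    _ = (1 + C₀⁻¹) ^ (k * (1 - lam)) := by
        rw [show k * (1 - lam) + -(k : ℝ) + lam * k = 0 by ring, Real.rpow_zero, mul_one]

variable {α β lam C₀ : ℝ}

lemma exists_sq_japWeight_mul_chainLIntegral_ewaldM_le (hβ : 0 ≤ β) (h0 : 0 < lam)
    (hm : lam ≤ m / 2) (hb : m / 2 - lam ≤ β) :
    ∃ D : ℝ≥0, ∀ (f : Fin (k + 1) → 𝓢(Euc (m + 1), ℂ)) (r : Fin k → ℝ), (∀ i, 0 < r i) →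
      ∀ η : Euc (m + 1), η ≠ 0 →
        (japWeight β η *
            chainLIntegral (fun i ↦ ewaldM (m + 1) (r i) η) (fun i x ↦ ‖ft (f i) x‖ₑ) η) ^ 2 ≤
          D * ((∏ i, ENNReal.ofReal ((1 + r i) ^ lam)) * ENNReal.ofReal (‖η‖ ^ lam) ^ k) ^ 2 *
            chainLIntegral (fun _ ↦ volume) (fun i ↦ sobolevDensity 2 (weightedFourier β (f i)))
              η := by
  obtain ⟨C, hC⟩ := exists_lintegral_ewaldM_japWeight_le h0 hm
  let B : ℝ≥0 := (((k : ℝ) + 1) ^ β).toNNReal * (k + 1)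
  have hB : ENNReal.ofReal (((k : ℝ) + 1) ^ β) * (k + 1) = B := by
    push_cast [B]
    rfl
  refine ⟨B ^ 2 * (C ^ k * (sphereConst m * ((m + 1) * 2)) ^ k), fun f r hr η hη ↦ ?_⟩
  have (i : Fin k) : IsFiniteMeasure (ewaldM (m + 1) (r i) η) := isFiniteMeasure_ewaldM (hr i) hη
  have hprod : ∏ i, C * (ENNReal.ofReal ((1 + r i) ^ lam) * ENNReal.ofReal (‖η‖ ^ lam)) ^ 2 =
      C ^ k * ((∏ i, ENNReal.ofReal ((1 + r i) ^ lam)) * ENNReal.ofReal (‖η‖ ^ lam) ^ k) ^ 2 := by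
    simp [Finset.prod_mul_distrib, Finset.prod_pow]
  have hchain := sq_japWeight_mul_chainLIntegral_ft_le hβ hb (fun i ↦ hC (r i) (hr i) η hη)
    (fun i ↦ hasProductTrace_ewaldM (hr i) hη) f η
  rw [hprod, hB] at hchain
  refine hchain.trans_eq ?_
  push_cast
  ring

lemma exists_enorm_jap_rpow_mul_Kj_sq_le (hβ : 0 ≤ β) (h0 : 0 < lam) (h1 : lam < 1)
    (hm : lam ≤ m / 2) (hb : m / 2 - lam ≤ β) (hα : α - β ≤ k * (1 - lam)) (hC₀ : 0 < C₀) :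
    ∃ D : ℝ≥0, ∀ (f : Fin (k + 1) → 𝓢(Euc (m + 1), ℂ)) (r : Fin k → ℝ), (∀ i, 0 < r i) →
      ∀ η : Euc (m + 1), C₀ ≤ ‖η‖ →
        ‖jap η ^ α * Kj k r (fun i ↦ ft (f i)) η‖ₑ ^ 2 ≤
          D * (∏ i, ENNReal.ofReal ((1 + r i) ^ lam)) ^ 2 *
            chainLIntegral (fun _ ↦ volume) (fun i ↦ sobolevDensity 2 (weightedFourier β (f i)))
              η := by
  obtain ⟨D, hD⟩ := exists_sq_japWeight_mul_chainLIntegral_ewaldM_le (k := k) hβ h0 hm hb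
  let E : ℝ≥0 := ((1 + C₀⁻¹) ^ (k * (1 - lam))).toNNReal
  refine ⟨E ^ 2 * D, fun f r hr η hη ↦ ?_⟩
  have hη0 : η ≠ 0 := norm_pos_iff.1 (hC₀.trans_le hη)
  have hjap (s : ℝ) : 0 ≤ jap η ^ s := Real.rpow_nonneg (jap_pos η).le s
  have hscalar : japWeight (α - β) η * ENNReal.ofReal (‖η‖ ^ (-(k : ℝ))) *
      ENNReal.ofReal (‖η‖ ^ lam) ^ k ≤ E := by
    rw [japWeight, ← ENNReal.ofReal_pow (by positivity), ← ENNReal.ofReal_mul (hjap _),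
      ← ENNReal.ofReal_mul (mul_nonneg (hjap _) (by positivity))]
    exact ENNReal.ofReal_le_ofReal (jap_rpow_mul_norm_rpow_le hC₀ h1 hα hη)
  have hweight : ‖jap η ^ α‖ₑ = japWeight (α - β) η * japWeight β η := by
    rw [← japWeight_add, sub_add_cancel, japWeight, Real.enorm_of_nonneg (hjap _)]
  set P := ∏ i, ENNReal.ofReal ((1 + r i) ^ lam)
  set V := chainLIntegral (fun _ ↦ volume) (fun i ↦ sobolevDensity 2 (weightedFourier β (f i))) η
  calc ‖jap η ^ α * Kj k r (fun i ↦ ft (f i)) η‖ₑ ^ 2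
      ≤ (japWeight (α - β) η * ENNReal.ofReal (‖η‖ ^ (-(k : ℝ)))) ^ 2 * (japWeight β η *
          chainLIntegral (fun i ↦ ewaldM (m + 1) (r i) η) (fun i x ↦ ‖ft (f i) x‖ₑ) η) ^ 2 := by
        grw [enorm_mul, hweight, enorm_Kj_le, ← mul_pow]
        exact (congrArg (· ^ 2) (by ring)).le
    _ ≤ (japWeight (α - β) η * ENNReal.ofReal (‖η‖ ^ (-(k : ℝ)))) ^ 2 *
          (D * (P * ENNReal.ofReal (‖η‖ ^ lam) ^ k) ^ 2 * V) := by
        gcongr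
        exact hD f r hr η hη0
    _ = (japWeight (α - β) η * ENNReal.ofReal (‖η‖ ^ (-(k : ℝ))) *
          ENNReal.ofReal (‖η‖ ^ lam) ^ k) ^ 2 * (D * P ^ 2 * V) := by ring
    _ ≤ E ^ 2 * (D * P ^ 2 * V) := by gcongr
    _ = ↑(E ^ 2 * D) * P ^ 2 * V := by push_cast; ring

end Ewald

/-! ### The weighted estimate -/

section Estimate

variable {m k : ℕ} {α β lam C₀ : ℝ}

lemma lintegral_chainLIntegral_sobolevDensity_weightedFourier {n : ℕ} (s : ℕ) (β : ℝ)
    (f : Fin (k + 1) → 𝓢(Euc n, ℂ)) :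
    ∫⁻ η, chainLIntegral (fun _ ↦ volume) (fun i ↦ sobolevDensity s (weightedFourier β (f i))) η =
      ENNReal.ofReal ((2 * Real.pi) ^ n) ^ (k + 1) * (∏ l, wSobNorm β s (f l)) ^ 2 := by
  rw [lintegral_chainLIntegral_volume fun i ↦ measurable_sobolevDensity _ _]
  simp [lintegral_sobolevDensity_weightedFourier, Finset.prod_mul_distrib, Finset.prod_pow]

lemma exists_eLpNorm_jap_rpow_mul_Kj_le (hβ : 0 ≤ β) (h0 : 0 < lam) (h1 : lam < 1)
    (hm : lam ≤ m / 2) (hb : m / 2 - lam ≤ β) (hα : α - β ≤ k * (1 - lam)) (hC₀ : 0 < C₀)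
    {χ : Euc (m + 1) → ℝ} (hχ01 : ∀ ξ, χ ξ ∈ Icc 0 1) (hχ0 : ∀ ξ, ‖ξ‖ < C₀ → χ ξ = 0) :
    ∃ C : ℝ, 0 < C ∧ ∀ (f : Fin (k + 1) → 𝓢(Euc (m + 1), ℂ)) (r : Fin k → ℝ), (∀ i, 0 < r i) →
      eLpNorm (fun η ↦ jap η ^ α * (χ η * Kj k r (fun i ↦ ft (f i)) η)) 2 volume ≤
        ENNReal.ofReal (C * ∏ i, (1 + r i) ^ lam) * ∏ l, wSobNorm β 2 (f l) := by
  obtain ⟨D, hD⟩ := exists_enorm_jap_rpow_mul_Kj_sq_le (k := k) hβ h0 h1 hm hb hα hC₀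
  let M : ℝ := (2 * Real.pi) ^ (m + 1)
  have : 0 < M := by positivity
  refine ⟨Real.sqrt (D * M ^ (k + 1) + 1), by positivity, fun f r hr ↦ ?_⟩
  set P := ∏ i, ENNReal.ofReal ((1 + r i) ^ lam)
  set W := ∏ l, wSobNorm β 2 (f l)
  let V := chainLIntegral (fun _ ↦ volume) fun i ↦ sobolevDensity 2 (weightedFourier β (f i))
  have hpoint (η : Euc (m + 1)) :
      ‖jap η ^ α * (χ η * Kj k r (fun i ↦ ft (f i)) η)‖ₑ ^ 2 ≤ D * P ^ 2 * V η := by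
    rcases lt_or_ge ‖η‖ C₀ with hη | hη
    · simp [hχ0 η hη]
    · have hχ : ‖χ η‖ₑ ≤ 1 := by
        rw [Real.enorm_of_nonneg (hχ01 η).1]
        exact ENNReal.ofReal_le_one.2 (hχ01 η).2
      grw [mul_left_comm, enorm_mul, hχ, one_mul]
      exact hD f r hr η hη
  have hP : ENNReal.ofReal (∏ i, (1 + r i) ^ lam) = P :=
    ENNReal.ofReal_prod_of_nonneg fun i _ ↦ Real.rpow_nonneg (by linarith [hr i]) lam
  have hconst : D * ENNReal.ofReal M ^ (k + 1) ≤
      ENNReal.ofReal (Real.sqrt (D * M ^ (k + 1) + 1)) ^ 2 := by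
    rw [← ENNReal.ofReal_pow (Real.sqrt_nonneg _), Real.sq_sqrt (by positivity),
      ← ENNReal.ofReal_pow (by positivity), ← ENNReal.ofReal_coe_nnreal,
      ← ENNReal.ofReal_mul (by positivity)]
    exact ENNReal.ofReal_le_ofReal (le_add_of_nonneg_right zero_le_one)
  rw [← ENNReal.pow_le_pow_left_iff two_ne_zero, eLpNorm_two_sq,
    ENNReal.ofReal_mul (by positivity), hP]
  calc ∫⁻ η, ‖jap η ^ α * (χ η * Kj k r (fun i ↦ ft (f i)) η)‖ₑ ^ 2
      ≤ ∫⁻ η, D * P ^ 2 * V η := lintegral_mono hpoint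
    _ = D * P ^ 2 * (ENNReal.ofReal M ^ (k + 1) * W ^ 2) := by
        rw [lintegral_const_mul' _ _ (by simp only [← hP]; finiteness),
          lintegral_chainLIntegral_sobolevDensity_weightedFourier, Nat.cast_ofNat]
    _ = D * ENNReal.ofReal M ^ (k + 1) * (P * W) ^ 2 := by ring
    _ ≤ ENNReal.ofReal (Real.sqrt (D * M ^ (k + 1) + 1)) ^ 2 * (P * W) ^ 2 := by gcongr
    _ = _ := by ring

lemma exists_admissible_exponent {k : ℕ} {d α β : ℝ} (hd : 0 < d) (hβ : 0 ≤ β)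
    (hrange : (d / 2 - 1 < β ∧ β < d / 2 ∧ α ≤ β + k * (β - (d / 2 - 1))) ∨
      (d / 2 ≤ β ∧ α < β + k)) :
    ∃ lam, 0 < lam ∧ lam < 1 ∧ lam ≤ d / 2 ∧ d / 2 - lam ≤ β ∧ α - β ≤ k * (1 - lam) := by
  obtain ⟨hβlo, hβhi, hα⟩ | ⟨hβlo, hα⟩ := hrange
  · exact ⟨d / 2 - β, by linarith, by linarith, by linarith, by linarith, by linarith⟩
  · have hcont : Tendsto (fun lam : ℝ ↦ k * (1 - lam)) (𝓝[>] 0) (𝓝 (k * (1 - 0))) :=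
      (by fun_prop : Continuous fun lam : ℝ ↦ k * (1 - lam)).continuousWithinAt
    have hα' : α - β < k * (1 - 0) := by linarith
    obtain ⟨lam, hlamα, h0, hlam⟩ := ((hcont.eventually (lt_mem_nhds hα')).and
      (Ioo_mem_nhdsGT (lt_min one_pos (half_pos hd)))).exists
    obtain ⟨h1, hlamd⟩ := lt_min_iff.1 hlam
    exact ⟨lam, h0, h1, hlamd.le, by linarith, hlamα.le⟩

theorem stmt9_general (n k : ℕ) (hn : 2 ≤ n) (β α : ℝ) (hβ : 0 ≤ β)
    (hrange : (((n : ℝ) - 3) / 2 < β ∧ β < ((n : ℝ) - 1) / 2 ∧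
        α ≤ β + (k : ℝ) * (β - ((n : ℝ) - 3) / 2)) ∨
      (((n : ℝ) - 1) / 2 ≤ β ∧ α < β + (k : ℝ)))
    (C₀ : ℝ) (hC₀ : 0 < C₀) (χ : Euc n → ℝ) (hχ01 : ∀ ξ, χ ξ ∈ Icc (0 : ℝ) 1)
    (hχ0 : ∀ ξ : Euc n, ‖ξ‖ < C₀ → χ ξ = 0) :
    ∃ lam C : ℝ, 0 < lam ∧ lam < 1 ∧ 0 < C ∧
      ∀ (f : Fin (k + 1) → SchwartzMap (Euc n) ℂ) (r : Fin k → ℝ), (∀ i, 0 < r i) →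
        eLpNorm (fun η : Euc n ↦ (jap η ^ α : ℝ) * (χ η * Kj k r (fun i ↦ ft (f i)) η)) 2 volume
          ≤ ENNReal.ofReal (C * ∏ i : Fin k, (1 + r i) ^ lam) *
            ∏ l : Fin (k + 1), wSobNorm β 2 (f l) := by
  obtain ⟨m, rfl⟩ : ∃ m, n = m + 1 := ⟨n - 1, by lia⟩
  have hm0 : (0 : ℝ) < m := by exact_mod_cast (by lia : 0 < m)
  rw [Nat.cast_add_one, show ((m : ℝ) + 1 - 3) / 2 = m / 2 - 1 by ring,
    add_sub_cancel_right] at hrange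
  obtain ⟨lam, h0, h1, hm, hb, hα⟩ := exists_admissible_exponent hm0 hβ hrange
  obtain ⟨C, hC, H⟩ := exists_eLpNorm_jap_rpow_mul_Kj_le hβ h0 h1 hm hb hα hC₀ hχ01 hχ0
  exact ⟨lam, C, h0, h1, hC, H⟩

end Estimate

/-- weighted `L²` estimate for `χ·K_{j,𝐫}(f̂₁,…,f̂_j)`, `j = k + 1 ≥ 3`. -/
theorem stmt9 (n k : ℕ) (hn : 2 ≤ n) (hk : 2 ≤ k) (β α : ℝ) (hβ : 0 ≤ β)
    (hrange : (((n : ℝ) - 3) / 2 < β ∧ β < ((n : ℝ) - 1) / 2 ∧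
        α ≤ β + (k : ℝ) * (β - ((n : ℝ) - 3) / 2)) ∨
      (((n : ℝ) - 1) / 2 ≤ β ∧ α < β + (k : ℝ)))
    (C₀ : ℝ) (hC₀ : 1 ≤ C₀) (χ : Euc n → ℝ) (hχsm : ContDiff ℝ (⊤ : ℕ∞) χ)
    (hχ01 : ∀ ξ, χ ξ ∈ Set.Icc (0 : ℝ) 1)
    (hχ1 : ∀ ξ : Euc n, 2 * C₀ < ‖ξ‖ → χ ξ = 1)
    (hχ0 : ∀ ξ : Euc n, ‖ξ‖ < C₀ → χ ξ = 0) :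
    ∃ lam C : ℝ, 0 < lam ∧ lam < 1 ∧ 0 < C ∧
      ∀ (f : Fin (k + 1) → SchwartzMap (Euc n) ℂ) (r : Fin k → ℝ), (∀ i, 0 < r i) →
        eLpNorm (fun η : Euc n =>
            (jap η ^ α : ℝ) * (χ η * Kj k r (fun i => ft ⇑(f i)) η)) 2 volume
          ≤ ENNReal.ofReal (C * ∏ i : Fin k, (1 + r i) ^ lam) *
            ∏ l : Fin (k + 1), wSobNorm β 2 (⇑(f l)) := by
  exact stmt9_general n k hn β α hβ hrange C₀ (by linarith) χ hχ01 hχ0
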